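/- arXiv:1409.8423 — 7 statements merged into one kernel-verified Lean document; each statement's English description precedes it below -/
import Mathlib

section
/- Let p₁, p₂, p₃ be distinct rational primes such that p₁ ≡ p₂ ≡ p₃ ≡ 2 (mod 9) or p₁ ≡ p₂ ≡ p₃ ≡ 5 (mod 9), and set A = p₁²p₂²p₃². Then the subset of k*/(k*)³ consisting of the classes [α] of those α ∈ k* for which C_{A,α}(k_q) ≠ ∅ for every prime element q of ℤ[ζ₃] is exactly the subgroup of k*/(k*)³ generated by the classes [A] and [p₁p₂²]. -/
open NumberField IsDedekindDomain

/-- The height-one prime of a Dedekind domain determined by a prime element. -/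
noncomputable def primeSpec {R : Type*} [CommRing R] [IsDomain R] [IsDedekindDomain R]
    {q : R} (hq : Prime q) : HeightOneSpectrum R where
  asIdeal := Ideal.span {q}
  isPrime := (Ideal.span_singleton_prime hq.ne_zero).mpr hq
  ne_bot := by simpa [Ne, Ideal.span_singleton_eq_bot] using hq.ne_zero

section LocalPart
variable {K : Type*} [Field K] [NumberField K]

/-- embedding of the integers in the completion -/
noncomputable def iot {q : 𝓞 K} (hq : Prime q) : 𝓞 K →+* (primeSpec hq).adicCompletion K :=
  (algebraMap K ((primeSpec hq).adicCompletion K)).comp (algebraMap (𝓞 K) K)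

lemma iot_eq {q : 𝓞 K} (hq : Prime q) (x : 𝓞 K) :
    iot hq x = algebraMap K ((primeSpec hq).adicCompletion K) (x : K) := rfl

lemma iot_emb {q : 𝓞 K} (hq : Prime q) (x : 𝓞 K) :
    iot hq x = FinitePlace.embedding (primeSpec hq) (algebraMap (𝓞 K) K x) := by
  rfl

lemma iot_inj {q : 𝓞 K} (hq : Prime q) : Function.Injective (iot hq) :=
  (algebraMap K ((primeSpec hq).adicCompletion K)).injective.comp
    (FaithfulSMul.algebraMap_injective (𝓞 K) K)

lemma norm_iot_le {q : 𝓞 K} (hq : Prime q) (x : 𝓞 K) : ‖iot hq x‖ ≤ 1 := by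
  rw [iot_emb]; exact FinitePlace.norm_le_one K _ x

lemma norm_iot_eq_one {q : 𝓞 K} (hq : Prime q) (x : 𝓞 K) : ‖iot hq x‖ = 1 ↔ ¬ q ∣ x := by
  rw [iot_emb, FinitePlace.norm_eq_one_iff_notMem]
  simp [primeSpec, Ideal.mem_span_singleton]

lemma norm_iot_q_lt {q : 𝓞 K} (hq : Prime q) : ‖iot hq q‖ < 1 :=
  lt_of_le_of_ne (norm_iot_le hq q) (fun h => (norm_iot_eq_one hq q).1 h dvd_rfl)

lemma norm_iot_q_pos {q : 𝓞 K} (hq : Prime q) : 0 < ‖iot hq q‖ := by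
  rw [norm_pos_iff]
  intro h
  exact hq.ne_zero (iot_inj hq (by simpa using h))

lemma norm_of_dvd {q : 𝓞 K} (hq : Prime q) {n : ℕ} {x : 𝓞 K} (h : q ^ n ∣ x) :
    ‖iot hq x‖ ≤ ‖iot hq q‖ ^ n := by
  obtain ⟨y, rfl⟩ := h
  rw [map_mul, map_pow, norm_mul, norm_pow]
  exact mul_le_of_le_one_right (by positivity) (norm_iot_le hq y)

lemma dvd_of_norm {q : 𝓞 K} (hq : Prime q) {n : ℕ} {x : 𝓞 K}
    (h : ‖iot hq x‖ ≤ ‖iot hq q‖ ^ n) : q ^ n ∣ x := by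
  by_cases hx : x = 0
  · simp [hx]
  obtain ⟨k, u, hu, rfl⟩ := WfDvdMonoid.max_power_factor hx hq.irreducible
  rw [map_mul, map_pow, norm_mul, norm_pow, (norm_iot_eq_one hq u).2 hu, mul_one] at h
  have : n ≤ k := (pow_le_pow_iff_right_of_lt_one₀ (norm_iot_q_pos hq) (norm_iot_q_lt hq)).1 h
  exact (pow_dvd_pow _ this).mul_right _

lemma nonarch {q : 𝓞 K} (hq : Prime q) (x y : (primeSpec hq).adicCompletion K) :
    ‖x + y‖ ≤ max ‖x‖ ‖y‖ := by
  rw [FinitePlace.norm_def, FinitePlace.norm_def, FinitePlace.norm_def]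
  have := Valued.v.map_add x y
  rcases le_total (Valued.v x) (Valued.v y) with h | h
  · rw [max_eq_right h] at this
    refine le_max_of_le_right ?_
    exact_mod_cast (WithZeroMulInt.toNNReal_strictMono
      (HeightOneSpectrum.one_lt_absNorm_nnreal (primeSpec hq))).monotone this
  · rw [max_eq_left h] at this
    refine le_max_of_le_left ?_
    exact_mod_cast (WithZeroMulInt.toNNReal_strictMono
      (HeightOneSpectrum.one_lt_absNorm_nnreal (primeSpec hq))).monotone this

lemma nonarch_sub {q : 𝓞 K} (hq : Prime q) {x y : (primeSpec hq).adicCompletion K} {c : ℝ}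
    (hx : ‖x‖ ≤ c) (hy : ‖y‖ ≤ c) : ‖x - y‖ ≤ c := by
  rw [sub_eq_add_neg]
  exact (nonarch hq x (-y)).trans (max_le hx (by simpa using hy))

lemma norm_val_le {q : 𝓞 K} (hq : Prime q) (k l : K) :
    ‖algebraMap K ((primeSpec hq).adicCompletion K) k‖ ≤
      ‖algebraMap K ((primeSpec hq).adicCompletion K) l‖ ↔
    (primeSpec hq).valuation K k ≤ (primeSpec hq).valuation K l := by
  change ‖FinitePlace.embedding _ k‖ ≤ ‖FinitePlace.embedding _ l‖ ↔ _
  rw [FinitePlace.norm_embedding', FinitePlace.norm_embedding', NNReal.coe_le_coe]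
  exact (WithZeroMulInt.toNNReal_strictMono
      (HeightOneSpectrum.one_lt_absNorm_nnreal (primeSpec hq))).le_iff_le

lemma dense_int {q : 𝓞 K} (hq : Prime q) (n : ℕ) (x : (primeSpec hq).adicCompletion K)
    (hx : ‖x‖ ≤ 1) : ∃ r : 𝓞 K, ‖x - iot hq r‖ ≤ ‖iot hq q‖ ^ n := by
  have hd := HeightOneSpectrum.denseRange_algebraMap (K := K) (primeSpec hq)
  obtain ⟨k, hk⟩ := (Metric.denseRange_iff.1 hd) x (‖iot hq q‖ ^ n)
    (pow_pos (norm_iot_q_pos hq) n)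
  rw [dist_eq_norm] at hk
  have hpow : ‖iot hq q‖ ^ n ≤ 1 := pow_le_one₀ (norm_nonneg _) (norm_iot_q_lt hq).le
  have hk1 : ‖algebraMap K ((primeSpec hq).adicCompletion K) k‖ ≤ 1 := by
    have : algebraMap K ((primeSpec hq).adicCompletion K) k =
      x - (x - algebraMap K ((primeSpec hq).adicCompletion K) k) := by ring
    rw [this]
    exact nonarch_sub hq hx (hk.le.trans hpow)
  have hk2 : (primeSpec hq).valuation K k ≤ 1 := by
    have := (norm_val_le hq k 1).1 (by simpa using hk1)
    simpa using this
  have hq0 : (primeSpec hq).valuation K ((q ^ n : 𝓞 K) : K) ≠ 0 := by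
    rw [Valuation.ne_zero_iff]
    have := pow_ne_zero n hq.ne_zero
    exact_mod_cast this
  obtain ⟨r, hr⟩ := HeightOneSpectrum.exists_valuation_sub_lt_of_integer (primeSpec hq) hk2
    (Units.mk0 _ hq0)
  refine ⟨r, ?_⟩
  have h2 := (norm_val_le hq _ _).2 hr.le
  have h3 : x - iot hq r = (x - algebraMap K ((primeSpec hq).adicCompletion K) k) -
     (algebraMap K ((primeSpec hq).adicCompletion K) (algebraMap (𝓞 K) K r - k)) := by
    rw [map_sub, iot_eq]; ring
  rw [h3]
  refine nonarch_sub hq hk.le (h2.trans ?_)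
  change ‖iot hq (q ^ n)‖ ≤ _
  rw [map_pow, norm_pow]

/-- from local solutions to primitive congruence solutions -/
lemma down {q : 𝓞 K} (hq : Prime q) (a b c : 𝓞 K) (n : ℕ)
    (h : ∃ x y z : (primeSpec hq).adicCompletion K, ¬ (x = 0 ∧ y = 0 ∧ z = 0) ∧
      iot hq a * x ^ 3 + iot hq b * y ^ 3 = iot hq c * z ^ 3) :
    ∃ x y z : 𝓞 K, ¬ (q ∣ x ∧ q ∣ y ∧ q ∣ z) ∧ q ^ n ∣ a * x ^ 3 + b * y ^ 3 - c * z ^ 3 := by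
  obtain ⟨x, y, z, hne, he⟩ := h
  -- divide by the largest coordinate
  have key : ∃ x y z : (primeSpec hq).adicCompletion K, (‖x‖ = 1 ∨ ‖y‖ = 1 ∨ ‖z‖ = 1) ∧
      ‖x‖ ≤ 1 ∧ ‖y‖ ≤ 1 ∧ ‖z‖ ≤ 1 ∧
      iot hq a * x ^ 3 + iot hq b * y ^ 3 = iot hq c * z ^ 3 := by
    have main : ∀ t : (primeSpec hq).adicCompletion K, (t = x ∨ t = y ∨ t = z) → ‖x‖ ≤ ‖t‖ →
        ‖y‖ ≤ ‖t‖ → ‖z‖ ≤ ‖t‖ → ∃ x y z : (primeSpec hq).adicCompletion K,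
        (‖x‖ = 1 ∨ ‖y‖ = 1 ∨ ‖z‖ = 1) ∧ ‖x‖ ≤ 1 ∧ ‖y‖ ≤ 1 ∧ ‖z‖ ≤ 1 ∧
        iot hq a * x ^ 3 + iot hq b * y ^ 3 = iot hq c * z ^ 3 := by
      intro t ht hx hy hz
      have ht0 : 0 < ‖t‖ := by
        by_contra hcon
        have h0 : ‖t‖ = 0 := le_antisymm (not_lt.1 hcon) (norm_nonneg _)
        rw [h0] at hx hy hz
        exact hne ⟨norm_le_zero_iff.1 hx, norm_le_zero_iff.1 hy, norm_le_zero_iff.1 hz⟩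
      have ht1 : t ≠ 0 := norm_pos_iff.1 ht0
      refine ⟨x / t, y / t, z / t, ?_, ?_, ?_, ?_, ?_⟩
      · rcases ht with rfl | rfl | rfl <;> simp [ht0.ne']
      · rw [norm_div]; exact (div_le_one ht0).2 hx
      · rw [norm_div]; exact (div_le_one ht0).2 hy
      · rw [norm_div]; exact (div_le_one ht0).2 hz
      · field_simp
        linear_combination he
    rcases le_total ‖x‖ ‖y‖ with h1 | h1 <;> rcases le_total ‖y‖ ‖z‖ with h2 | h2 <;>
      rcases le_total ‖x‖ ‖z‖ with h3 | h3
    · exact main z (by simp) h3 h2 le_rfl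
    · exact main z (by simp) (h1.trans h2) h2 le_rfl
    · exact main y (by simp) h1 le_rfl h2
    · exact main y (by simp) h1 le_rfl h2
    · exact main z (by simp) h3 h2 le_rfl
    · exact main x (by simp) le_rfl h1 h3
    · exact main x (by simp) le_rfl h1 (h2.trans h1)
    · exact main x (by simp) le_rfl h1 h3
  clear he hne
  clear x y z
  obtain ⟨x, y, z, h1, hx, hy, hz, he⟩ := key
  obtain ⟨r, hr⟩ := dense_int hq (n + 1) x hx
  obtain ⟨s, hs⟩ := dense_int hq (n + 1) y hy
  obtain ⟨t, ht⟩ := dense_int hq (n + 1) z hz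
  have hnd : ∀ (w : (primeSpec hq).adicCompletion K) (m : 𝓞 K), ‖w‖ = 1 →
      ‖w - iot hq m‖ ≤ ‖iot hq q‖ ^ (n + 1) → ¬ q ∣ m := by
    intro w m hw hm hdvd
    have hlt : ‖iot hq q‖ ^ (n + 1) ≤ ‖iot hq q‖ := by
      rw [pow_succ]
      exact mul_le_of_le_one_left (norm_nonneg _)
        (pow_le_one₀ (norm_nonneg _) (norm_iot_q_lt hq).le)
    have h2 : ‖iot hq m‖ ≤ ‖iot hq q‖ := by
      simpa using norm_of_dvd hq (n := 1) (by simpa using hdvd)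
    have h3 : ‖w‖ ≤ ‖iot hq q‖ := by
      have : w = (w - iot hq m) - (- iot hq m) := by ring
      rw [this]
      exact nonarch_sub hq (hm.trans hlt) (by simpa using h2)
    have := norm_iot_q_lt hq
    linarith
  refine ⟨r, s, t, ?_, ?_⟩
  · rintro ⟨h2, h3, h4⟩
    rcases h1 with h1 | h1 | h1
    · exact hnd x r h1 hr h2
    · exact hnd y s h1 hs h3
    · exact hnd z t h1 ht h4
  · apply dvd_of_norm hq
    have cub : ∀ (w : (primeSpec hq).adicCompletion K) (m a : 𝓞 K), ‖w‖ ≤ 1 →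
      ‖w - iot hq m‖ ≤ ‖iot hq q‖ ^ (n + 1) →
      ‖iot hq a * (w ^ 3 - iot hq m ^ 3)‖ ≤ ‖iot hq q‖ ^ n := by
      intro w m a hw hm
      have e : iot hq a * (w ^ 3 - iot hq m ^ 3) =
        (w - iot hq m) * (iot hq a * (w ^ 2 + w * iot hq m + iot hq m ^ 2)) := by ring
      have hm1 := norm_iot_le hq m
      have b1 : ‖w ^ 2 + w * iot hq m + iot hq m ^ 2‖ ≤ 1 := by
        refine (nonarch hq _ _).trans (max_le ((nonarch hq _ _).trans (max_le ?_ ?_)) ?_)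
        · rw [norm_pow]; exact pow_le_one₀ (norm_nonneg _) hw
        · rw [norm_mul]; exact mul_le_one₀ hw (norm_nonneg _) hm1
        · rw [norm_pow]; exact pow_le_one₀ (norm_nonneg _) hm1
      have b2 : ‖iot hq a * (w ^ 2 + w * iot hq m + iot hq m ^ 2)‖ ≤ 1 := by
        rw [norm_mul]; exact mul_le_one₀ (norm_iot_le hq a) (norm_nonneg _) b1
      rw [e, norm_mul]
      refine (mul_le_of_le_one_right (norm_nonneg _) b2).trans (hm.trans ?_)
      exact pow_le_pow_of_le_one (norm_nonneg _) (norm_iot_q_lt hq).le (by omega)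
    have e : iot hq (a * r ^ 3 + b * s ^ 3 - c * t ^ 3) =
      (iot hq c * (z ^ 3 - iot hq t ^ 3) - iot hq b * (y ^ 3 - iot hq s ^ 3)) -
        iot hq a * (x ^ 3 - iot hq r ^ 3) := by
      simp only [map_add, map_sub, map_mul, map_pow]
      linear_combination he
    rw [e]
    exact nonarch_sub hq (nonarch_sub hq (cub _ _ _ hz ht) (cub _ _ _ hy hs)) (cub _ _ _ hx hr)

/-- coherent approximate cube roots give a cube root -/
lemma cube_of_seq {q : 𝓞 K} (hq : Prime q) (u : 𝓞 K) (f : ℕ → 𝓞 K)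
    (h1 : ∀ n, q ^ n ∣ f (n + 1) - f n) (h2 : ∀ n, q ^ n ∣ f n ^ 3 - u) :
    ∃ w : (primeSpec hq).adicCompletion K, w ^ 3 = iot hq u := by
  have hc : CauchySeq (fun n => iot hq (f n)) := by
    apply cauchySeq_of_le_geometric ‖iot hq q‖ 1 (norm_iot_q_lt hq)
    intro n
    rw [dist_comm, dist_eq_norm, ← map_sub, one_mul]
    exact norm_of_dvd hq (h1 n)
  obtain ⟨w, hw⟩ := cauchySeq_tendsto_of_complete hc
  refine ⟨w, ?_⟩
  have t1 : Filter.Tendsto (fun n => iot hq (f n) ^ 3 - iot hq u) Filter.atTop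
    (nhds (w ^ 3 - iot hq u)) := (hw.pow 3).sub_const _
  have t2 : Filter.Tendsto (fun n => iot hq (f n) ^ 3 - iot hq u) Filter.atTop (nhds 0) := by
    apply squeeze_zero_norm (a := fun n => ‖iot hq q‖ ^ n)
    · intro n
      have := norm_of_dvd hq (h2 n)
      simpa using this
    · exact tendsto_pow_atTop_nhds_zero_of_lt_one (norm_nonneg _) (norm_iot_q_lt hq)
  exact sub_eq_zero.1 (tendsto_nhds_unique t1 t2)

end LocalPart
section FF
variable {F : Type*} [Field F] [Finite F]

lemma ff_index {g t : F} (hg0 : g ≠ 0) (ht0 : t ≠ 0) (hg : ¬ ∃ r, g = r ^ 3) :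
    (∃ r, t = r ^ 3) ∨ (∃ r, t * g = r ^ 3) ∨ (∃ r, t * g ^ 2 = r ^ 3) := by
  obtain ⟨ω, hω⟩ := IsCyclic.exists_generator (α := Fˣ)
  obtain ⟨i, hi⟩ := Subgroup.mem_zpowers_iff.1 (hω (Units.mk0 g hg0))
  obtain ⟨j, hj⟩ := Subgroup.mem_zpowers_iff.1 (hω (Units.mk0 t ht0))
  have hi' : g = (ω : F) ^ i := by
    have := congrArg Units.val hi
    simpa using this.symm
  have hj' : t = (ω : F) ^ j := by
    have := congrArg Units.val hj
    simpa using this.symm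
  have hω0 : (ω : F) ≠ 0 := ω.ne_zero
  have cub : ∀ n : ℤ, n % 3 = 0 → ∃ r : F, (ω : F) ^ n = r ^ 3 := by
    intro n hn
    refine ⟨(ω : F) ^ (n / 3), ?_⟩
    rw [← zpow_natCast, ← zpow_mul]
    congr 1
    push_cast
    omega
  have hi3 : i % 3 ≠ 0 := by
    intro h
    exact hg (hi' ▸ cub i h)
  have : j % 3 = 0 ∨ (j + i) % 3 = 0 ∨ (j + (i + i)) % 3 = 0 := by
    have h1 : i % 3 = 1 ∨ i % 3 = 2 := by omega
    have h2 : j % 3 = 0 ∨ j % 3 = 1 ∨ j % 3 = 2 := by omega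
    rcases h1 with h1 | h1 <;> rcases h2 with h2 | h2 | h2 <;> omega
  rcases this with h | h | h
  · left; rw [hj']; exact cub _ h
  · right; left; rw [hj', hi', ← zpow_add₀ hω0]; exact cub _ h
  · right; right; rw [hj', hi', pow_two, ← zpow_add₀ hω0, ← zpow_add₀ hω0]; exact cub _ h

lemma ff_norm_form {g : F} (hg0 : g ≠ 0) (hg : ¬ ∃ r, g = r ^ 3) :
    ∃ x y z : F, ¬ (x = 0 ∧ y = 0 ∧ z = 0) ∧ x ^ 3 + g * y ^ 3 + g ^ 2 * z ^ 3 = 0 := by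
  classical
  by_contra! hno
  have := Fintype.ofFinite F
  let H : Finset F := Finset.univ.filter (fun t => t ≠ 0 ∧ ∃ r, t = r ^ 3)
  have hm1 : (-1 : F) ∈ H := by
    simp only [H, Finset.mem_filter, Finset.mem_univ, true_and]
    exact ⟨by simp, -1, by ring⟩
  let f : F → F := fun h => if ∃ r, g * h + 1 = r ^ 3 then -1 - g * h else -1 - (g * h)⁻¹
  have hmaps : ∀ h ∈ H, f h ∈ H.erase (-1) := by
    intro h hh
    simp only [H, Finset.mem_filter, Finset.mem_univ, true_and] at hh
    obtain ⟨h0, p, hp⟩ := hh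
    have hp0 : p ≠ 0 := by rintro rfl; simp at hp; exact h0 hp
    have hgh : g * h ≠ 0 := mul_ne_zero hg0 h0
    have hne : g * h + 1 ≠ 0 := by
      intro h1
      have := hno 1 p 0 (by simp)
      apply this
      rw [← hp]; linear_combination h1
    by_cases hc : ∃ r, g * h + 1 = r ^ 3
    · simp only [f, hc, if_true, Finset.mem_erase, H, Finset.mem_filter, Finset.mem_univ, true_and]
      obtain ⟨r, hr⟩ := hc
      refine ⟨fun h1 => hgh (by linear_combination -h1),
        fun h1 => hne (by linear_combination -h1), -r, ?_⟩
      linear_combination -hr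
    · simp only [f, hc, if_false, Finset.mem_erase, H, Finset.mem_filter, Finset.mem_univ, true_and]
      rcases ff_index hg0 hne hg with h1 | ⟨r, hr⟩ | ⟨r, hr⟩
      · exact absurd h1 hc
      · exfalso
        apply hno g (g * p) (-r) (by simp [hg0])
        rw [hp] at hr
        linear_combination g ^ 2 * hr
      · have e : -1 - (g * h)⁻¹ = -(g * h + 1) * (g * h)⁻¹ := by field_simp; ring
        refine ⟨fun h1 => inv_ne_zero hgh (by linear_combination -h1), ?_, -r / (g * p), ?_⟩
        · rw [e]
          exact mul_ne_zero (neg_ne_zero.2 hne) (inv_ne_zero hgh)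
        · rw [e, div_pow, mul_pow, hp]
          rw [hp] at hr
          field_simp
          linear_combination -hr
  obtain ⟨s, hs, t, ht, hst, hf⟩ := Finset.exists_ne_map_eq_of_card_lt_of_maps_to
    (Finset.card_erase_lt_of_mem hm1) hmaps
  simp only [H, Finset.mem_filter, Finset.mem_univ, true_and] at hs ht
  have mixed : ∀ s t : F, (s ≠ 0 ∧ ∃ r, s = r ^ 3) → (t ≠ 0 ∧ ∃ r, t = r ^ 3) →
      -1 - g * s = -1 - (g * t)⁻¹ → False := by
    rintro s t ⟨hs0, a, ha⟩ ⟨ht0, b, hb⟩ h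
    have h2 : g * s = (g * t)⁻¹ := by linear_combination -h
    have h3 : g ^ 2 * (s * t) = 1 := by
      have : g * t ≠ 0 := mul_ne_zero hg0 ht0
      field_simp at h2
      linear_combination h2
    apply hg
    refine ⟨g * (a * b), ?_⟩
    rw [ha, hb] at h3
    linear_combination -g * h3
  simp only [f] at hf
  split_ifs at hf with h1 h2 h2
  · exact hst (mul_left_cancel₀ hg0 (by linear_combination -hf))
  · exact mixed s t hs ht hf
  · exact mixed t s ht hs hf.symm
  · have : (g * s)⁻¹ = (g * t)⁻¹ := by linear_combination -hf
    exact hst (mul_left_cancel₀ hg0 (inv_injective this))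

lemma ff_cubic {a b c : F} (ha : a ≠ 0) (hb : b ≠ 0) (hc : c ≠ 0) :
    ∃ x y z : F, ¬ (x = 0 ∧ y = 0 ∧ z = 0) ∧ a * x ^ 3 + b * y ^ 3 + c * z ^ 3 = 0 := by
  by_cases hg : ∃ r, b / a = r ^ 3
  · obtain ⟨r, hr⟩ := hg
    refine ⟨-r, 1, 0, by simp, ?_⟩
    field_simp at hr
    linear_combination hr
  have hg0 : b / a ≠ 0 := div_ne_zero hb ha
  rcases ff_index (t := c / a) hg0 (div_ne_zero hc ha) hg with ⟨r, hr⟩ | ⟨r, hr⟩ | ⟨r, hr⟩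
  · refine ⟨-r, 0, 1, by simp, ?_⟩
    field_simp at hr
    linear_combination hr
  · obtain ⟨x, y, z, hne, h⟩ := ff_norm_form hg0 hg
    have hr0 : r ≠ 0 := by
      rintro rfl
      simp [ha, hb, hc] at hr
    refine ⟨x, y, (b / a) * z / r, ?_, ?_⟩
    · simpa [ha, hb, hc, hr0] using hne
    · field_simp at hr h ⊢
      linear_combination a ^ 2 * r ^ 3 * h + b^2 * z^3 * hr
  · refine ⟨0, -r * a / b, 1, by simp, ?_⟩
    field_simp at hr ⊢
    linear_combination hr
end FF
section LocalCubes
variable {K : Type*} [Field K] [NumberField K]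

lemma exists_inv_mod {q : 𝓞 K} (hq : Prime q) {x : 𝓞 K} (hx : ¬ q ∣ x) :
    ∃ s, q ∣ x * s - 1 := by
  have hmax : (Ideal.span {q} : Ideal (𝓞 K)).IsMaximal := (primeSpec hq).isMaximal
  obtain ⟨y, hy⟩ := hmax.exists_inv (x := x) (by rwa [Ideal.mem_span_singleton])
  obtain ⟨i, hi, h⟩ := hy
  rw [Ideal.mem_span_singleton] at hi
  refine ⟨y, ?_⟩
  have : x * y - 1 = -i := by linear_combination h
  rw [this]; exact (dvd_neg).2 hi

lemma cube_unit {q : 𝓞 K} (hq : Prime q) (h3 : ¬ q ∣ 3) (u x : 𝓞 K) (hx : ¬ q ∣ x)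
    (hxu : q ∣ x ^ 3 - u) : ∃ w : (primeSpec hq).adicCompletion K, w ^ 3 = iot hq u := by
  have step : ∀ (n : ℕ) (x : 𝓞 K), (¬ q ∣ x ∧ q ^ (n + 1) ∣ x ^ 3 - u) →
      ∃ y : 𝓞 K, (¬ q ∣ y ∧ q ^ (n + 1 + 1) ∣ y ^ 3 - u) ∧ q ^ (n + 1) ∣ y - x := by
    rintro n x ⟨hx, hd⟩
    obtain ⟨s, t, hs⟩ := exists_inv_mod hq (x := 3 * x ^ 2)
      (fun h => (hq.dvd_or_dvd h).elim h3 (fun h => hx (hq.dvd_of_dvd_pow h)))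
    obtain ⟨d, hd⟩ := hd
    refine ⟨x - q ^ (n + 1) * (s * d), ⟨?_, ?_⟩, ?_⟩
    · intro h
      apply hx
      have := dvd_add h (show q ∣ q ^ (n + 1) * (s * d) from
        (dvd_pow_self q (by omega)).mul_right _)
      simpa using this
    · refine ⟨-t * d + q ^ n * (3 * x * (s * d) ^ 2 - q ^ (n + 1) * (s * d) ^ 3), ?_⟩
      rw [sub_eq_iff_eq_add] at hd
      linear_combination hd - q ^ (n + 1) * d * hs
    · exact ⟨-(s * d), by ring⟩
  choose! g hg1 hg2 using step
  let f : ℕ → 𝓞 K := fun n => Nat.rec x (fun k y => g k y) n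
  have hf : ∀ n, ¬ q ∣ f n ∧ q ^ (n + 1) ∣ f n ^ 3 - u := by
    intro n
    induction n with
    | zero => exact ⟨hx, by simpa [f] using hxu⟩
    | succ k ih => exact hg1 k (f k) ih
  apply cube_of_seq hq u f
  · intro n
    exact (pow_dvd_pow q (by omega)).trans (hg2 n (f n) (hf n))
  · intro n
    exact (pow_dvd_pow q (by omega)).trans (hf n).2

lemma cube_three {q : 𝓞 K} (hq : Prime q) (h3 : q ∣ 3) (u : ℤ) (hu : 9 ∣ u - 1) :
    ∃ w : (primeSpec hq).adicCompletion K, w ^ 3 = iot hq u := by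
  have step : ∀ (n : ℕ) (x : ℤ), (3 ∣ x - 1 ∧ 3 ^ (n + 2) ∣ x ^ 3 - u) →
      ∃ y : ℤ, (3 ∣ y - 1 ∧ 3 ^ (n + 1 + 2) ∣ y ^ 3 - u) ∧ 3 ^ (n + 1) ∣ y - x := by
    rintro n x ⟨⟨e, he⟩, ⟨d, hd⟩⟩
    refine ⟨x - 3 ^ (n + 1) * d, ⟨?_, ?_⟩, ?_⟩
    · refine ⟨e - 3 ^ n * d, ?_⟩
      linear_combination he
    · refine ⟨-(2 * e + 3 * e ^ 2) * d + 3 ^ n * x * d ^ 2 - 3 ^ (2 * n) * d ^ 3, ?_⟩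
      have hx : x = 3 * e + 1 := by linear_combination he
      have h2 : (3 : ℤ) ^ (2 * n) = 3 ^ n * 3 ^ n := by rw [two_mul, pow_add]
      rw [h2]
      have h3 : u = x ^ 3 - 3 ^ (n + 2) * d := by linear_combination -hd
      rw [h3, hx]
      ring
    · exact ⟨-d, by ring⟩
  choose! g hg1 hg2 using step
  let f : ℕ → ℤ := fun n => Nat.rec 1 (fun k y => g k y) n
  have hf : ∀ n, 3 ∣ f n - 1 ∧ 3 ^ (n + 2) ∣ f n ^ 3 - u := by
    intro n
    induction n with
    | zero =>
      refine ⟨by simp [f], ?_⟩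
      have : (f 0) ^ 3 - u = -(u - 1) := by simp [f]
      rw [this]
      exact (dvd_neg).2 (by norm_num; exact hu)
    | succ k ih => exact hg1 k (f k) ih
  have tr : ∀ (n : ℕ) (a : ℤ), 3 ^ n ∣ a → q ^ n ∣ (a : 𝓞 K) := by
    rintro n a ⟨b, rfl⟩
    push_cast
    exact (pow_dvd_pow_of_dvd h3 n).mul_right _
  apply cube_of_seq hq (u : 𝓞 K) (fun n => (Int.cast (f n) : 𝓞 K))
  · intro n
    have := tr n _ ((pow_dvd_pow 3 (by omega)).trans (hg2 n (f n) (hf n)))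
    push_cast at this
    exact this
  · intro n
    have := tr n _ ((pow_dvd_pow 3 (by omega)).trans (hf n).2)
    push_cast at this
    exact this

lemma lift_sol {q : 𝓞 K} (hq : Prime q) (h3 : ¬ q ∣ 3) {a b c x y z : 𝓞 K} (ha : ¬ q ∣ a)
    (hx : ¬ q ∣ x) (h : q ∣ a * x ^ 3 + b * y ^ 3 + c * z ^ 3) :
    ∃ X : (primeSpec hq).adicCompletion K, X ≠ 0 ∧
      iot hq a * X ^ 3 + iot hq b * iot hq y ^ 3 + iot hq c * iot hq z ^ 3 = 0 := by
  have hax : ¬ q ∣ a * x := fun h => (hq.dvd_or_dvd h).elim ha hx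
  obtain ⟨w, hw⟩ := cube_unit hq h3 (-(a ^ 2 * (b * y ^ 3 + c * z ^ 3))) (a * x) hax
    (by
      have : (a * x) ^ 3 - (-(a ^ 2 * (b * y ^ 3 + c * z ^ 3))) =
        (a * x ^ 3 + b * y ^ 3 + c * z ^ 3) * a ^ 2 := by ring
      rw [this]; exact h.mul_right _)
  have ha0 : iot hq a ≠ 0 := by
    intro h0
    apply ha
    rw [(iot_inj hq) (h0.trans (map_zero _).symm)]
    exact dvd_zero _
  refine ⟨w / iot hq a, ?_, ?_⟩
  · intro h0
    have hw0 : w = 0 := by simpa [ha0] using h0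
    rw [hw0] at hw
    have h1 : -(a ^ 2 * (b * y ^ 3 + c * z ^ 3)) = 0 := by
      apply iot_inj hq
      rw [← hw]; simp
    have h2 : a * (a * x) ^ 2 * x = a ^ 2 * (a * x ^ 3 + b * y ^ 3 + c * z ^ 3) := by
      linear_combination h1
    have h3 : q ∣ a * (a * x) ^ 2 * x := h2 ▸ h.mul_left _
    rcases hq.dvd_or_dvd h3 with h4 | h4
    · rcases hq.dvd_or_dvd h4 with h4 | h4
      · exact ha h4
      · exact hax (hq.dvd_of_dvd_pow h4)
    · exact hx h4
  · simp only [map_neg, map_mul, map_pow, map_add] at hw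
    rw [div_pow, hw]
    field_simp
    ring

lemma good_local {q : 𝓞 K} (hq : Prime q) (h3 : ¬ q ∣ 3) {a b c : 𝓞 K} (ha : ¬ q ∣ a)
    (hb : ¬ q ∣ b) (hc : ¬ q ∣ c) :
    ∃ x y z : (primeSpec hq).adicCompletion K, ¬ (x = 0 ∧ y = 0 ∧ z = 0) ∧
      iot hq a * x ^ 3 + iot hq b * y ^ 3 = iot hq c * z ^ 3 := by
  have hmax : (Ideal.span {q} : Ideal (𝓞 K)).IsMaximal := (primeSpec hq).isMaximal
  let _ : Field (𝓞 K ⧸ Ideal.span {q}) := Ideal.Quotient.field _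
  have : Finite (𝓞 K ⧸ Ideal.span {q}) :=
    Ideal.finiteQuotientOfFreeOfNeBot _ (primeSpec hq).ne_bot
  have hz : ∀ t : 𝓞 K, Ideal.Quotient.mk (Ideal.span {q}) t = 0 ↔ q ∣ t := by
    intro t
    rw [Ideal.Quotient.eq_zero_iff_mem, Ideal.mem_span_singleton]
  have hc' : ¬ q ∣ -c := by rwa [dvd_neg]
  obtain ⟨x, y, z, hne, h⟩ := ff_cubic (F := 𝓞 K ⧸ Ideal.span {q}) (mt (hz a).1 ha)
    (mt (hz b).1 hb) (mt (hz (-c)).1 hc')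
  obtain ⟨x, rfl⟩ := Ideal.Quotient.mk_surjective x
  obtain ⟨y, rfl⟩ := Ideal.Quotient.mk_surjective y
  obtain ⟨z, rfl⟩ := Ideal.Quotient.mk_surjective z
  simp only [← map_pow, ← map_mul, ← map_add, hz] at hne h
  have hcases : ¬ q ∣ x ∨ ¬ q ∣ y ∨ ¬ q ∣ z := by tauto
  rcases hcases with hx | hx | hx
  · obtain ⟨X, hX, e⟩ := lift_sol hq h3 (a := a) (b := b) (c := -c) ha hx h
    refine ⟨X, iot hq y, iot hq z, by tauto, ?_⟩
    rw [map_neg] at e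
    linear_combination e
  · obtain ⟨X, hX, e⟩ := lift_sol hq h3 (a := b) (b := a) (c := -c) hb hx
      (y := x) (z := z) (by convert h using 1; ring)
    refine ⟨iot hq x, X, iot hq z, by tauto, ?_⟩
    rw [map_neg] at e
    linear_combination e
  · obtain ⟨X, hX, e⟩ := lift_sol hq h3 (a := -c) (b := a) (c := b) hc' hx
      (y := x) (z := y) (by convert h using 1; ring)
    refine ⟨iot hq x, iot hq y, X, by tauto, ?_⟩
    rw [map_neg] at e
    linear_combination e

end LocalCubes
section Back
variable {K : Type*} [Field K] [NumberField K]

lemma int_cube_mod (p : ℕ) (hp : p.Prime) (h2 : p % 3 = 2) (m : ℤ) (hm : ¬ (p : ℤ) ∣ m) :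
    ∃ n : ℤ, (p : ℤ) ∣ n ^ 3 - m := by
  have := Fact.mk hp
  obtain ⟨j, hj⟩ : ∃ j, p = 3 * j + 2 := ⟨p / 3, by omega⟩
  refine ⟨m ^ (2 * j + 1), ?_⟩
  rw [← ZMod.intCast_zmod_eq_zero_iff_dvd]
  have hm0 : (m : ZMod p) ≠ 0 := by rwa [Ne, ZMod.intCast_zmod_eq_zero_iff_dvd]
  have h1 := ZMod.pow_card_sub_one_eq_one hm0
  have h2 : p - 1 = 3 * j + 1 := by omega
  rw [h2] at h1
  push_cast
  have : ((m : ZMod p) ^ (2 * j + 1)) ^ 3 = ((m : ZMod p) ^ (3 * j + 1)) ^ 2 * m := by ring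
  rw [this, h1]; ring

lemma not_dvd_coprime {q : 𝓞 K} (hq : Prime q) {a b : ℤ} (ha : q ∣ (a : 𝓞 K))
    (hab : IsCoprime a b) : ¬ q ∣ (b : 𝓞 K) := by
  intro hb
  obtain ⟨s, t, h⟩ := hab
  apply hq.not_unit
  rw [isUnit_iff_dvd_one]
  have : (1 : 𝓞 K) = s * a + t * b := by exact_mod_cast h.symm
  rw [this]
  exact dvd_add (ha.mul_left _) (hb.mul_left _)

lemma coprime_of_not_dvd {p : ℕ} (hp : p.Prime) {m : ℤ} (hm : ¬ (p : ℤ) ∣ m) :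
    IsCoprime (p : ℤ) m :=
  (Prime.coprime_iff_not_dvd (Nat.prime_iff_prime_int.1 hp)).2 hm

lemma cube_pm {q : 𝓞 K} (hq : Prime q) (p : ℕ) (hp : p.Prime) (h2 : p % 3 = 2)
    (hqp : q ∣ (p : 𝓞 K)) (m : ℤ) (hm : ¬ (p : ℤ) ∣ m) :
    ∃ w : (primeSpec hq).adicCompletion K, w ^ 3 = iot hq m := by
  obtain ⟨n, hn⟩ := int_cube_mod p hp h2 m hm
  have hqp' : q ∣ ((p : ℤ) : 𝓞 K) := by exact_mod_cast hqp
  have h3 : ¬ q ∣ 3 := by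
    have := not_dvd_coprime hq (b := 3) hqp' (coprime_of_not_dvd hp (by
      intro h
      have : p ∣ 3 := by exact_mod_cast h
      have := (Nat.prime_dvd_prime_iff_eq hp Nat.prime_three).1 this
      omega))
    simpa using this
  apply cube_unit hq h3 m n
  · apply not_dvd_coprime hq hqp' (coprime_of_not_dvd hp _)
    intro h
    apply hm
    have := dvd_sub (h.trans (dvd_pow_self n three_ne_zero)) hn
    simpa using this
  · obtain ⟨d, hd⟩ := hn
    refine hqp'.trans ⟨(d : 𝓞 K), ?_⟩
    exact_mod_cast hd

/-- local solubility in integral form -/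
def LS {q : 𝓞 K} (hq : Prime q) (A β : 𝓞 K) : Prop :=
  ∃ x y z : (primeSpec hq).adicCompletion K, ¬ (x = 0 ∧ y = 0 ∧ z = 0) ∧
      iot hq (β ^ 2) * x ^ 3 + iot hq 1 * y ^ 3 = iot hq (A * β) * z ^ 3

lemma LS_bad {q : 𝓞 K} (hq : Prime q) (p : ℕ) (hp : p.Prime) (h2 : p % 3 = 2)
    (hqp : q ∣ (p : 𝓞 K)) (m M : ℤ) (hm : ¬ (p : ℤ) ∣ m) (hM : ¬ (p : ℤ) ∣ M) (e : ℕ) :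
    LS hq (p ^ 2 * M) (p ^ e * m) := by
  have hpp := Nat.prime_iff_prime_int.1 hp
  have hM0 : iot hq (M : 𝓞 K) ≠ 0 := by
    intro h
    have : (M : 𝓞 K) = 0 := iot_inj hq (h.trans (map_zero _).symm)
    apply hM
    have : M = 0 := by exact_mod_cast this
    simp [this]
  have hp0 : iot hq (p : 𝓞 K) ≠ 0 := by
    intro h
    have : (p : 𝓞 K) = 0 := iot_inj hq (h.trans (map_zero _).symm)
    exact hp.ne_zero (by exact_mod_cast this)
  have he : e = 3 * (e / 3) ∨ e = 3 * (e / 3) + 1 ∨ e = 3 * (e / 3) + 2 := by omega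
  generalize e / 3 = k at he
  rcases he with rfl | rfl | rfl
  · obtain ⟨w, hw⟩ := cube_pm hq p hp h2 hqp (m ^ 2) (fun h => hm (hpp.dvd_of_dvd_pow h))
    refine ⟨1, -(iot hq p ^ (2 * k) * w), 0, by simp, ?_⟩
    have : (-(iot hq p ^ (2 * k) * w)) ^ 3 = -(iot hq p ^ (6 * k) * w ^ 3) := by ring
    rw [this, hw]
    push_cast
    simp only [map_mul, map_pow, map_one]
    ring
  · obtain ⟨w, hw⟩ := cube_pm hq p hp h2 hqp (m * M)
      (fun h => (hpp.dvd_or_dvd h).elim hm hM)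
    refine ⟨0, (iot hq p ^ (k + 1) * w), 1, by simp, ?_⟩
    have : ((iot hq p ^ (k + 1) * w)) ^ 3 = (iot hq p ^ (3 * k + 3) * w ^ 3) := by ring
    rw [this, hw]
    push_cast
    simp only [map_mul, map_pow, map_one]
    ring
  · obtain ⟨w, hw⟩ := cube_pm hq p hp h2 hqp (m * M ^ 2)
      (fun h => (hpp.dvd_or_dvd h).elim hm (fun h => hM (hpp.dvd_of_dvd_pow h)))
    refine ⟨1, 0, iot hq p ^ (k) * w / iot hq M, by simp, ?_⟩
    have : (iot hq p ^ (k) * w / iot hq M) ^ 3 =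
      (iot hq p ^ (3 * k) * w ^ 3 / iot hq M ^ 3) := by ring
    rw [this, hw]
    push_cast
    simp only [map_mul, map_pow, map_one]
    field_simp
    ring

lemma LS_three {q : 𝓞 K} (hq : Prime q) (h3 : q ∣ 3) (A : 𝓞 K) (β : ℤ)
    (hβ : 9 ∣ β - 1 ∨ 9 ∣ β + 1) : LS hq A β := by
  have : ∃ w : (primeSpec hq).adicCompletion K, w ^ 3 = iot hq β := by
    rcases hβ with h | h
    · exact cube_three hq h3 β h
    · obtain ⟨w, hw⟩ := cube_three hq h3 (-β) (by
        have : -β - 1 = -(β + 1) := by ring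
        rw [this]; exact (dvd_neg).2 h)
      refine ⟨-w, ?_⟩
      have : (-w) ^ 3 = - w ^ 3 := by ring
      rw [this, hw]; push_cast; simp
  obtain ⟨w, hw⟩ := this
  refine ⟨1, -w ^ 2, 0, by simp, ?_⟩
  have : (-w ^ 2) ^ 3 = -(w ^ 3) ^ 2 := by ring
  rw [this, hw]; simp

lemma LS_good {q : 𝓞 K} (hq : Prime q) (h3 : ¬ q ∣ 3) (A β : 𝓞 K) (hA : ¬ q ∣ A)
    (hβ : ¬ q ∣ β) : LS hq A β :=
  good_local hq h3 (fun h => hβ (hq.dvd_of_dvd_pow h)) (fun h => hq.not_unit (isUnit_of_dvd_one h))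
    (fun h => (hq.dvd_or_dvd h).elim hA hβ)

lemma LS_iff {q : 𝓞 K} (hq : Prime q) (A β : 𝓞 K) (hβ : β ≠ 0) (γ α : K) (hγ : γ ≠ 0)
    (hα : α = (β : K) * γ ^ 3) :
    (∃ x y z : (primeSpec hq).adicCompletion K,
          ¬(x = 0 ∧ y = 0 ∧ z = 0) ∧
          algebraMap K ((primeSpec hq).adicCompletion K) α * x ^ 3
            + algebraMap K ((primeSpec hq).adicCompletion K) α⁻¹ * y ^ 3
            = algebraMap K ((primeSpec hq).adicCompletion K) (A : K) * z ^ 3) ↔ LS hq A β := by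
  have hb : iot hq β ≠ 0 := fun h => hβ (iot_inj hq (h.trans (map_zero _).symm))
  have hg : algebraMap K ((primeSpec hq).adicCompletion K) γ ≠ 0 := by simpa using hγ
  have ea : algebraMap K ((primeSpec hq).adicCompletion K) α =
    iot hq β * (algebraMap K ((primeSpec hq).adicCompletion K) γ) ^ 3 := by
    rw [hα, map_mul, map_pow, iot_eq]
  rw [map_inv₀, ea, ← iot_eq hq A]
  generalize algebraMap K ((primeSpec hq).adicCompletion K) γ = g at hg
  unfold LS
  simp only [map_mul, map_pow, map_one, one_mul]
  constructor
  · rintro ⟨x, y, z, hne, h⟩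
    refine ⟨g * x, y / g, z, by simpa [hg] using hne, ?_⟩
    field_simp at h ⊢
    linear_combination h
  · rintro ⟨x, y, z, hne, h⟩
    refine ⟨x / g, g * y, z, by simpa [hg] using hne, ?_⟩
    field_simp at h ⊢
    linear_combination h

end Back
section Arith
variable {K : Type*} [Field K] [NumberField K]

/-- natural number norm -/
noncomputable def NN (x : 𝓞 K) : ℕ := Ideal.absNorm (Ideal.span {x})

lemma NN_mul (x y : 𝓞 K) : NN (x * y) = NN x * NN y := by
  unfold NN
  rw [← Ideal.span_singleton_mul_span_singleton, map_mul]

lemma NN_pow (x : 𝓞 K) (n : ℕ) : NN (x ^ n) = NN x ^ n := by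
  unfold NN
  rw [← Ideal.span_singleton_pow, map_pow]

lemma NN_dvd {x y : 𝓞 K} (h : x ∣ y) : NN x ∣ NN y := by
  obtain ⟨z, rfl⟩ := h
  rw [NN_mul]; exact Dvd.intro _ rfl

lemma NN_one_iff (x : 𝓞 K) : NN x = 1 ↔ IsUnit x := by
  unfold NN
  rw [Ideal.absNorm_eq_one_iff, Ideal.span_singleton_eq_top]

lemma NN_card (x : 𝓞 K) : NN x = Nat.card (𝓞 K ⧸ Ideal.span {x}) := by
  unfold NN
  rw [Ideal.absNorm_apply]; rfl

lemma NN_norm (x : 𝓞 K) : NN x = (Algebra.norm ℤ x).natAbs := by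
  unfold NN
  rw [Ideal.absNorm_span_singleton]

variable [IsCyclotomicExtension {3} ℚ K]

lemma NN_int (n : ℤ) : NN (n : 𝓞 K) = n.natAbs ^ 2 := by
  rw [NN_norm]
  have : (n : 𝓞 K) = algebraMap ℤ (𝓞 K) n := by simp
  rw [this, Algebra.norm_algebraMap, RingOfIntegers.rank,
    IsCyclotomicExtension.Rat.finrank 3 K, Int.natAbs_pow]
  rfl

lemma NN_lam {ζ : K} (hζ : IsPrimitiveRoot ζ 3) : NN (hζ.toInteger - 1) = 3 := by
  rw [NN_norm, hζ.norm_toInteger_sub_one_of_prime_ne_two' (by decide)]; rfl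

lemma lam_cube_dvd {ζ : K} (hζ : IsPrimitiveRoot ζ 3) (n : ℤ)
    (h : (hζ.toInteger - 1) ^ 3 ∣ (n : 𝓞 K)) : 9 ∣ n := by
  have h1 := NN_dvd h
  rw [NN_pow, NN_lam, NN_int] at h1
  have h2 : 3 ∣ n.natAbs := Nat.prime_three.dvd_of_dvd_pow ((by norm_num : 3 ∣ 3 ^ 3).trans h1)
  obtain ⟨m, hm⟩ := h2
  rw [hm] at h1
  have h3 : 3 ∣ m ^ 2 := by
    obtain ⟨t, ht⟩ := h1
    refine ⟨t, ?_⟩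
    nlinarith
  obtain ⟨k, rfl⟩ := Nat.prime_three.dvd_of_dvd_pow h3
  omega

lemma p_not_dvd_lam {ζ : K} (hζ : IsPrimitiveRoot ζ 3) (p : ℕ) (hp : p.Prime) (x : 𝓞 K)
    (hx : p ∣ NN x) (h : x ∣ hζ.toInteger - 1) : p = 3 := by
  have := NN_dvd h
  rw [NN_lam] at this
  exact (Nat.prime_dvd_prime_iff_eq hp Nat.prime_three).1 (hx.trans this)

lemma inert (p : ℕ) (hp : p.Prime) (h2 : p % 3 = 2) : Prime (p : 𝓞 K) := by
  have : IsPrincipalIdealRing (𝓞 K) := IsCyclotomicExtension.Rat.three_pid K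
  have hζ := IsCyclotomicExtension.zeta_spec 3 ℚ K
  have hNp : NN (p : 𝓞 K) = p ^ 2 := by simpa using NN_int (K := K) (p : ℤ)
  rw [← irreducible_iff_prime]
  refine ⟨fun h => ?_, ?_⟩
  · rw [← NN_one_iff, hNp] at h
    have := hp.one_lt
    nlinarith
  · intro x y hxy
    by_contra! hcon
    rw [← NN_one_iff, ← NN_one_iff] at hcon
    have hm : NN x * NN y = p ^ 2 := by rw [← NN_mul, ← hxy, hNp]
    have hx : NN x = p := by
      obtain ⟨i, hi, hxi⟩ := (Nat.dvd_prime_pow hp).1 (Dvd.intro _ hm)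
      interval_cases i
      · simp at hxi; exact absurd hxi hcon.1
      · simpa using hxi
      · rw [hxi] at hm
        have : NN y = 1 := by
          have hpos : 0 < p ^ 2 := pow_pos hp.pos 2
          nlinarith
        exact absurd this hcon.2
    have hI : (Ideal.span {x}).IsPrime := by
      apply Ideal.isPrime_of_irreducible_absNorm
      change Irreducible (NN x)
      rw [hx]; exact hp
    have hx0 : (Ideal.span {x} : Ideal (𝓞 K)) ≠ ⊥ := by
      intro h
      rw [Ideal.span_singleton_eq_bot] at h
      rw [h, zero_mul] at hxy
      exact hp.ne_zero (by exact_mod_cast hxy)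
    have hmax := hI.isMaximal hx0
    let _ : Field (𝓞 K ⧸ Ideal.span {x}) := Ideal.Quotient.field _
    have : Finite (𝓞 K ⧸ Ideal.span {x}) := Ideal.finiteQuotientOfFreeOfNeBot _ hx0
    have := Fintype.ofFinite (𝓞 K ⧸ Ideal.span {x})
    have hcard : Fintype.card (𝓞 K ⧸ Ideal.span {x}) = p := by
      rw [← Nat.card_eq_fintype_card, ← NN_card, hx]
    have hz : ∀ t : 𝓞 K, Ideal.Quotient.mk (Ideal.span {x}) t = 0 ↔ x ∣ t := by
      intro t
      rw [Ideal.Quotient.eq_zero_iff_mem, Ideal.mem_span_singleton]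
    have h1 := FiniteField.pow_card (Ideal.Quotient.mk (Ideal.span {x}) hζ.toInteger)
    have h3 : (Ideal.Quotient.mk (Ideal.span {x}) hζ.toInteger) ^ 3 = 1 := by
      rw [← map_pow, hζ.toInteger_cube_eq_one, map_one]
    obtain ⟨j, hj⟩ : ∃ j, p = 3 * j + 2 := ⟨p / 3, by omega⟩
    rw [hcard, hj, pow_add, pow_mul, h3, one_pow, one_mul] at h1
    have h4 : Ideal.Quotient.mk (Ideal.span {x}) hζ.toInteger = 1 := by
      linear_combination h3 - h1 - (Ideal.Quotient.mk (Ideal.span {x}) hζ.toInteger) * h1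
    have h5 : x ∣ hζ.toInteger - 1 := by rw [← hz, map_sub, h4]; simp
    have := p_not_dvd_lam hζ p hp x (by rw [hx]) h5
    omega

lemma ncube (p : ℕ) (hp : p.Prime) (h9 : p % 9 = 2 ∨ p % 9 = 5) (v X Z : 𝓞 K) (n : ℤ)
    (hv : v ^ 3 = 1) (hn : ¬ (p : ℤ) ∣ n) (hX : ¬ (p : 𝓞 K) ∣ X)
    (h : (p : 𝓞 K) ∣ v * n * X ^ 3 - Z ^ 3) : (p : 𝓞 K) ∣ v - 1 := by
  have hpr : Prime (p : 𝓞 K) := inert p hp (by omega)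
  have hNp : NN (p : 𝓞 K) = p ^ 2 := by simpa using NN_int (K := K) (p : ℤ)
  have hmax : (Ideal.span {(p : 𝓞 K)}).IsMaximal := (primeSpec hpr).isMaximal
  let _ : Field (𝓞 K ⧸ Ideal.span {(p : 𝓞 K)}) := Ideal.Quotient.field _
  have : Finite (𝓞 K ⧸ Ideal.span {(p : 𝓞 K)}) :=
    Ideal.finiteQuotientOfFreeOfNeBot _ (primeSpec hpr).ne_bot
  have := Fintype.ofFinite (𝓞 K ⧸ Ideal.span {(p : 𝓞 K)})
  have hcard : Fintype.card (𝓞 K ⧸ Ideal.span {(p : 𝓞 K)}) = p ^ 2 := by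
    rw [← Nat.card_eq_fintype_card, ← NN_card, hNp]
  have hz : ∀ t : 𝓞 K, Ideal.Quotient.mk (Ideal.span {(p : 𝓞 K)}) t = 0 ↔ (p : 𝓞 K) ∣ t := by
    intro t
    rw [Ideal.Quotient.eq_zero_iff_mem, Ideal.mem_span_singleton]
  obtain ⟨r, hr⟩ := int_cube_mod p hp (by omega) n hn
  have hpr' : (p : 𝓞 K) ∣ ((p : ℤ) : 𝓞 K) := by simp
  have hnn : ¬ (p : 𝓞 K) ∣ n := not_dvd_coprime hpr hpr' (coprime_of_not_dvd hp hn)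
  have hr1 : (p : 𝓞 K) ∣ (r : 𝓞 K) ^ 3 - n := by
    obtain ⟨d, hd⟩ := hr
    exact ⟨d, by exact_mod_cast hd⟩
  rw [← hz] at h hr1 hX hnn ⊢
  generalize Ideal.Quotient.mk (Ideal.span {(p : 𝓞 K)}) = φ at *
  simp only [map_sub, map_mul, map_pow, map_one] at h hr1 ⊢
  have hv' : φ v ^ 3 = 1 := by rw [← map_pow, hv, map_one]
  have hn' : φ n = φ r ^ 3 := by linear_combination -hr1
  have hr0 : φ r ≠ 0 := by
    intro h0
    rw [h0] at hn'
    exact hnn (by simpa using hn')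
  have hv0 : φ v ≠ 0 := by
    intro h0
    rw [h0] at hv'
    simp at hv'
  have hvc : φ v = (φ Z / (φ r * φ X)) ^ 3 := by
    rw [hn'] at h
    field_simp
    linear_combination h
  generalize φ Z / (φ r * φ X) = c at hvc
  have hc0 : c ≠ 0 := by
    rintro rfl
    exact hv0 (by simpa using hvc)
  have h1 := FiniteField.pow_card_sub_one_eq_one c hc0
  rw [hcard] at h1
  have hk : ∃ k, p ^ 2 - 1 = 3 * (3 * k + 1) ∨ p ^ 2 - 1 = 3 * (3 * k + 2) := by
    rcases h9 with h9 | h9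
    · obtain ⟨i, hi⟩ : ∃ i, p = 9 * i + 2 := ⟨p / 9, by omega⟩
      refine ⟨9 * i ^ 2 + 4 * i, Or.inl ?_⟩
      rw [hi]
      apply Nat.sub_eq_of_eq_add
      ring
    · obtain ⟨i, hi⟩ : ∃ i, p = 9 * i + 5 := ⟨p / 9, by omega⟩
      refine ⟨9 * i ^ 2 + 10 * i + 2, Or.inr ?_⟩
      rw [hi]
      apply Nat.sub_eq_of_eq_add
      ring
  obtain ⟨k, hk | hk⟩ := hk
  · rw [hk, pow_mul, ← hvc, pow_add, pow_mul, hv', one_pow, one_mul, pow_one] at h1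
    rw [h1, sub_self]
  · rw [hk, pow_mul, ← hvc, pow_add, pow_mul, hv', one_pow, one_mul] at h1
    have : φ v = 1 := by linear_combination hv' - φ v * h1
    rw [this, sub_self]

end Arith
section Nec
lemma prime_cube {R : Type*} [CommRing R] {q x : R} (hq : Prime q) (h : q ∣ x ^ 3) : q ∣ x :=
  hq.dvd_of_dvd_pow h

lemma prime_mul_cube {R : Type*} [CommRing R] {q a x : R} (hq : Prime q) (ha : ¬ q ∣ a)
    (h : q ∣ a * x ^ 3) : q ∣ x :=
  hq.dvd_of_dvd_pow ((hq.dvd_or_dvd h).resolve_left ha)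

lemma nec1 {R : Type*} [CommRing R] [IsDomain R] {q a b x y z : R} (hq : Prime q)
    (ha : ¬ q ∣ a) (hb : ¬ q ∣ b) (h : q ^ 3 ∣ q ^ 2 * a * x ^ 3 + y ^ 3 - q * b * z ^ 3) :
    q ∣ x ∧ q ∣ y ∧ q ∣ z := by
  obtain ⟨t, ht⟩ := h
  have hy : q ∣ y := prime_cube hq ⟨q ^ 2 * t - q * a * x ^ 3 + b * z ^ 3, by
    linear_combination ht⟩
  obtain ⟨y', rfl⟩ := hy
  have hz : q ∣ z := prime_mul_cube hq hb ⟨a * x ^ 3 + q * y' ^ 3 - q * t, by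
    apply mul_left_cancel₀ hq.ne_zero
    linear_combination -ht⟩
  obtain ⟨z', rfl⟩ := hz
  have hx : q ∣ x := prime_mul_cube hq ha ⟨t - y' ^ 3 + q * b * z' ^ 3, by
    apply mul_left_cancel₀ (pow_ne_zero 2 hq.ne_zero)
    linear_combination ht⟩
  exact ⟨hx, dvd_mul_right _ _, dvd_mul_right _ _⟩

lemma nec2 {R : Type*} [CommRing R] [IsDomain R] {q a b x y z : R} (hq : Prime q)
    (ha : ¬ q ∣ a) (hb : ¬ q ∣ b) (h : q ^ 5 ∣ q ^ 4 * a * x ^ 3 + y ^ 3 - q ^ 2 * b * z ^ 3) :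
    q ∣ x ∧ q ∣ y ∧ q ∣ z := by
  obtain ⟨t, ht⟩ := h
  have hy : q ∣ y := prime_cube hq ⟨q ^ 4 * t - q ^ 3 * a * x ^ 3 + q * b * z ^ 3, by
    linear_combination ht⟩
  obtain ⟨y', rfl⟩ := hy
  have hz : q ∣ z := prime_mul_cube hq hb ⟨q * a * x ^ 3 + y' ^ 3 - q ^ 2 * t, by
    apply mul_left_cancel₀ (pow_ne_zero 2 hq.ne_zero)
    linear_combination -ht⟩
  obtain ⟨z', rfl⟩ := hz
  have hy : q ∣ y' := prime_cube hq ⟨q * t - a * x ^ 3 + q * b * z' ^ 3, by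
    apply mul_left_cancel₀ (pow_ne_zero 3 hq.ne_zero)
    linear_combination ht⟩
  obtain ⟨y'', rfl⟩ := hy
  have hx : q ∣ x := prime_mul_cube hq ha ⟨t - q * y'' ^ 3 + b * z' ^ 3, by
    apply mul_left_cancel₀ (pow_ne_zero 4 hq.ne_zero)
    linear_combination ht⟩
  exact ⟨hx, dvd_mul_right _ _, dvd_mul_right _ _⟩
variable {K : Type*} [Field K] [NumberField K]

lemma nec_good {q : 𝓞 K} (hq : Prime q) {A β : 𝓞 K} (hA : ¬ q ∣ A) (h3 : ¬ q ^ 3 ∣ β)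
    (h : LS hq A β) : ¬ q ∣ β := by
  rintro ⟨β', rfl⟩
  by_cases h1 : q ∣ β'
  · obtain ⟨b, rfl⟩ := h1
    have hb : ¬ q ∣ b := by
      rintro ⟨c, rfl⟩
      exact h3 ⟨c, by ring⟩
    obtain ⟨x, y, z, hn, hd⟩ := down hq _ _ _ 5 h
    refine hn (nec2 hq (a := b ^ 2) (b := A * b) (fun h => hb (hq.dvd_of_dvd_pow h))
      (fun h => (hq.dvd_or_dvd h).elim hA hb) ?_)
    convert hd using 1
    ring
  · obtain ⟨x, y, z, hn, hd⟩ := down hq _ _ _ 3 h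
    refine hn (nec1 hq (a := β' ^ 2) (b := A * β') (fun h => h1 (hq.dvd_of_dvd_pow h))
      (fun h => (hq.dvd_or_dvd h).elim hA h1) ?_)
    convert hd using 1
    ring

variable [IsCyclotomicExtension {3} ℚ K]

lemma cube_mod_lam {ζ : K} (hζ : IsPrimitiveRoot ζ 3) (x : 𝓞 K) :
    ∃ e : ℤ, (e = 0 ∨ e = 1 ∨ e = -1) ∧ (hζ.toInteger - 1) ^ 3 ∣ x ^ 3 - (e : 𝓞 K) ∧
      (e = 0 → hζ.toInteger - 1 ∣ x) := by
  by_cases h : hζ.toInteger - 1 ∣ x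
  · refine ⟨0, by simp, ?_, fun _ => h⟩
    simpa using pow_dvd_pow_of_dvd h 3
  · rcases IsCyclotomicExtension.Rat.Three.lambda_pow_four_dvd_cube_sub_one_or_add_one_of_lambda_not_dvd
      hζ h with h | h
    · refine ⟨1, by simp, ?_, by simp⟩
      simpa using (pow_dvd_pow _ (by norm_num)).trans h
    · refine ⟨-1, by simp, ?_, by simp⟩
      simpa using (pow_dvd_pow _ (by norm_num)).trans h

lemma nec_lam {ζ : K} (hζ : IsPrimitiveRoot ζ 3) (hq : Prime (hζ.toInteger - 1))
    (A β : ℤ) (hA : A % 9 = 1) (hβ : β % 3 ≠ 0) (h : LS hq (A : 𝓞 K) (β : 𝓞 K)) :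
    β % 9 = 1 ∨ β % 9 = 8 := by
  obtain ⟨x, y, z, hn, hd⟩ := down hq _ _ _ 3 h
  obtain ⟨e1, h1, h1', h1''⟩ := cube_mod_lam hζ x
  obtain ⟨e2, h2, h2', h2''⟩ := cube_mod_lam hζ y
  obtain ⟨e3, h3, h3', h3''⟩ := cube_mod_lam hζ z
  have key : (9 : ℤ) ∣ β ^ 2 * e1 + e2 - A * β * e3 := by
    apply lam_cube_dvd hζ
    have := ((hd.sub (h1'.mul_left ((β : 𝓞 K) ^ 2))).sub h2').add
      (h3'.mul_left ((A : 𝓞 K) * β))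
    convert this using 1
    push_cast
    ring
  have hne : ¬ (e1 = 0 ∧ e2 = 0 ∧ e3 = 0) := fun ⟨a, b, c⟩ => hn ⟨h1'' a, h2'' b, h3'' c⟩
  obtain ⟨a, rfl⟩ : ∃ a, A = 9 * a + 1 := ⟨A / 9, by omega⟩
  have key2 : (9 : ℤ) ∣ β ^ 2 * e1 + e2 - β * e3 := by
    obtain ⟨t, ht⟩ := key
    exact ⟨t + a * β * e3, by linear_combination ht⟩
  clear key h1' h2' h3' hd hn h h1'' h2'' h3''
  obtain ⟨b, r, hr, hr9⟩ : ∃ b r : ℤ, β = 9 * b + r ∧ (r = 1 ∨ r = 2 ∨ r = 4 ∨ r = 5 ∨ r = 7 ∨ r = 8) :=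
    ⟨β / 9, β % 9, by omega, by omega⟩
  have key3 : (9 : ℤ) ∣ r ^ 2 * e1 + e2 - r * e3 := by
    obtain ⟨t, ht⟩ := key2
    exact ⟨t - (9 * b ^ 2 + 2 * b * r) * e1 + b * e3, by subst hr; linear_combination ht⟩
  clear key2
  rcases hr9 with rfl | rfl | rfl | rfl | rfl | rfl <;> try omega
  all_goals
    exfalso
    rcases h1 with rfl | rfl | rfl <;> rcases h2 with rfl | rfl | rfl <;>
      rcases h3 with rfl | rfl | rfl <;> first | omega | (exact hne ⟨rfl, rfl, rfl⟩)

lemma nec_p (p : ℕ) (hp : p.Prime) (h9 : p % 9 = 2 ∨ p % 9 = 5) (hpr : Prime (p : 𝓞 K))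
    (v : 𝓞 K) (m M : ℤ) (hv : v ^ 3 = 1) (hm : ¬ (p : ℤ) ∣ m) (hM : ¬ (p : ℤ) ∣ M)
    (a : ℕ) (ha : a ≤ 2)
    (h : LS hpr ((p : 𝓞 K) ^ 2 * M) ((p : 𝓞 K) ^ a * (v * m))) : (p : 𝓞 K) ∣ v - 1 := by
  have hpp : (p : 𝓞 K) ∣ ((p : ℤ) : 𝓞 K) := by simp
  have hm' : ¬ (p : 𝓞 K) ∣ m := not_dvd_coprime hpr hpp (coprime_of_not_dvd hp hm)
  have hM' : ¬ (p : 𝓞 K) ∣ M := not_dvd_coprime hpr hpp (coprime_of_not_dvd hp hM)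
  have hv' : ¬ (p : 𝓞 K) ∣ v := fun h =>
    hpr.not_unit (isUnit_of_dvd_one (h.trans ⟨v ^ 2, by linear_combination -hv⟩))
  have hpz : Prime (p : ℤ) := Nat.prime_iff_prime_int.mp hp
  have e0 : (p : 𝓞 K) ≠ 0 := hpr.ne_zero
  generalize hqq : (p : 𝓞 K) = q at *
  obtain ⟨x, y, z, hn, t, ht⟩ := down hpr _ _ _ 5 h
  have hnc := ncube (K := K) p hp h9
  rw [hqq] at hnc
  interval_cases a
  · have hx : ¬ q ∣ x := by
      rintro ⟨x', rfl⟩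
      have hy : q ∣ y := prime_cube hpr ⟨q ^ 4 * t - q ^ 2 * (v * m) ^ 2 * x' ^ 3 + q * M * v * m * z ^ 3, by
        linear_combination ht⟩
      obtain ⟨y', rfl⟩ := hy
      have hz : q ∣ z := by
        refine prime_mul_cube hpr (a := M * v * m) ?_ ⟨(v * m) ^ 2 * x' ^ 3 + y' ^ 3 - q ^ 2 * t, ?_⟩
        · intro h
          rcases hpr.dvd_or_dvd h with h | h
          · exact (hpr.dvd_or_dvd h).elim hM' hv'
          · exact hm' h
        · apply mul_left_cancel₀ (pow_ne_zero 2 e0)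
          linear_combination -ht
      exact hn ⟨dvd_mul_right _ _, dvd_mul_right _ _, hz⟩
    have := hnc (v ^ 2) x (-y) (m ^ 2) (by rw [← pow_mul, mul_comm, pow_mul, hv, one_pow])
      (fun h => hm (hpz.dvd_of_dvd_pow h)) hx
      ⟨q ^ 4 * t + q * M * v * m * z ^ 3, by push_cast; linear_combination ht⟩
    obtain ⟨s, hs⟩ := this
    exact ⟨s * (v ^ 2 + 1), by linear_combination (v ^ 2 + 1) * hs - v * hv⟩
  · have hy : q ∣ y := prime_cube hpr ⟨q ^ 4 * t - q * (v * m) ^ 2 * x ^ 3 + q ^ 2 * M * v * m * z ^ 3, by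
        linear_combination ht⟩
    obtain ⟨y', rfl⟩ := hy
    have hx : q ∣ x := by
      refine prime_mul_cube hpr (a := (v * m) ^ 2) ?_ ⟨q ^ 2 * t - y' ^ 3 + M * v * m * z ^ 3, ?_⟩
      · intro h
        exact (hpr.dvd_or_dvd (hpr.dvd_of_dvd_pow h)).elim hv' hm'
      · apply mul_left_cancel₀ (pow_ne_zero 2 e0)
        linear_combination ht
    obtain ⟨x', rfl⟩ := hx
    have hz : ¬ q ∣ z := fun h => hn ⟨dvd_mul_right _ _, dvd_mul_right _ _, h⟩
    refine hnc v z y' (M * m) hv (fun h => (hpz.dvd_or_dvd h).elim hM hm) hz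
      ⟨q * (v * m) ^ 2 * x' ^ 3 - q * t, ?_⟩
    apply mul_left_cancel₀ (pow_ne_zero 3 e0)
    push_cast
    linear_combination -ht
  · have hy : q ∣ y := prime_cube hpr ⟨q ^ 4 * t - q ^ 3 * (v * m) ^ 2 * x ^ 3 + q ^ 3 * M * v * m * z ^ 3, by
        linear_combination ht⟩
    obtain ⟨y', rfl⟩ := hy
    have hy : q ∣ y' := prime_cube hpr ⟨q * t - (v * m) ^ 2 * x ^ 3 + M * v * m * z ^ 3, by
      apply mul_left_cancel₀ (pow_ne_zero 3 e0)
      linear_combination ht⟩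
    obtain ⟨y'', rfl⟩ := hy
    have hk : (v * m) ^ 2 * x ^ 3 - M * v * m * z ^ 3 = q * (t - q * y'' ^ 3) := by
      apply mul_left_cancel₀ (pow_ne_zero 4 e0)
      linear_combination ht
    have hx : ¬ q ∣ x := by
      rintro ⟨x', rfl⟩
      have hz : q ∣ z := by
        refine prime_mul_cube hpr (a := M * v * m) ?_
          ⟨(v * m) ^ 2 * q ^ 2 * x' ^ 3 - (t - q * y'' ^ 3), ?_⟩
        · intro h
          rcases hpr.dvd_or_dvd h with h | h
          · exact (hpr.dvd_or_dvd h).elim hM' hv'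
          · exact hm' h
        · linear_combination -hk
      exact hn ⟨dvd_mul_right _ _, dvd_mul_right _ _, hz⟩
    refine hnc v x (m * M * z) (m ^ 4 * M ^ 2) hv (fun h => (hpz.dvd_or_dvd h).elim
      (fun h => hm (hpz.dvd_of_dvd_pow h)) (fun h => hM (hpz.dvd_of_dvd_pow h))) hx
      ⟨v ^ 2 * m ^ 2 * M ^ 2 * (t - q * y'' ^ 3), ?_⟩
    push_cast
    linear_combination v ^ 2 * m ^ 2 * M ^ 2 * hk - (v * m ^ 4 * M ^ 2 * x ^ 3 - (m * M * z)^3) * hv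

lemma unit_root {ζ : K} (hζ : IsPrimitiveRoot ζ 3) (u : (𝓞 K)ˣ) :
    ∃ (s : ℤ) (v : 𝓞 K), (s = 1 ∨ s = -1) ∧ (u : 𝓞 K) = v * s ∧ v ^ 3 = 1 ∧
      (v = 1 ∨ v - 1 ∣ hζ.toInteger - 1) := by
  have h := IsCyclotomicExtension.Rat.Three.Units.mem hζ u
  have h3 : hζ.toInteger ^ 3 = 1 := hζ.toInteger_cube_eq_one
  have h6 : (hζ.toInteger ^ 2) ^ 3 = 1 := by rw [← pow_mul, mul_comm, pow_mul, h3, one_pow]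
  have hd : hζ.toInteger ^ 2 - 1 ∣ hζ.toInteger - 1 :=
    ⟨-hζ.toInteger, by linear_combination h3⟩
  simp only [List.mem_cons, List.not_mem_nil, or_false] at h
  rcases h with rfl | rfl | rfl | rfl | rfl | rfl
  · exact ⟨1, 1, by simp, by simp, by simp, by simp⟩
  · exact ⟨-1, 1, by simp, by simp, by simp, by simp⟩
  · exact ⟨1, hζ.toInteger, by simp, by simp, h3, by simp⟩
  · exact ⟨-1, hζ.toInteger, by simp, by simp, h3, by simp⟩
  · exact ⟨1, hζ.toInteger ^ 2, by simp, by simp, h6, Or.inr hd⟩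
  · exact ⟨-1, hζ.toInteger ^ 2, by simp, by simp, h6, Or.inr hd⟩

lemma root_one {ζ : K} (hζ : IsPrimitiveRoot ζ 3) (p : ℕ) (hp : p.Prime) (h3 : p ≠ 3) (v : 𝓞 K)
    (hv : v = 1 ∨ v - 1 ∣ hζ.toInteger - 1) (h : (p : 𝓞 K) ∣ v - 1) : v = 1 := by
  refine hv.resolve_right fun h' => h3 (p_not_dvd_lam hζ p hp (p : 𝓞 K) ?_ (h.trans h'))
  have : NN (p : 𝓞 K) = p ^ 2 := by simpa using NN_int (K := K) (p : ℤ)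
  rw [this]
  exact dvd_pow_self p two_ne_zero

lemma cubefree_part (x : 𝓞 K) (hx : x ≠ 0) :
    ∃ β δ : 𝓞 K, x = β * δ ^ 3 ∧ β ≠ 0 ∧ δ ≠ 0 ∧ ∀ q : 𝓞 K, Prime q → ¬ q ^ 3 ∣ β := by
  induction x using (wellFounded_dvdNotUnit (α := 𝓞 K)).induction with
  | _ x ih =>
    by_cases h : ∃ q : 𝓞 K, Prime q ∧ q ^ 3 ∣ x
    · obtain ⟨q, hq, y, rfl⟩ := h
      have hy : y ≠ 0 := right_ne_zero_of_mul hx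
      obtain ⟨β, δ, h1, h2, h3, h4⟩ := ih y ⟨hy, q ^ 3, fun h => hq.not_unit
        ((isUnit_pow_iff three_ne_zero).mp h), mul_comm _ _⟩ hy
      exact ⟨β, q * δ, by rw [h1]; ring, h2, mul_ne_zero hq.ne_zero h3, h4⟩
    · push Not at h
      exact ⟨x, 1, by simp, hx, one_ne_zero, h⟩

lemma mod_aux (r : ℤ) (hr : r = 2 ∨ r = 5) (N : ℕ) :
    ∃ e : ℤ, (e = 1 ∨ e = -1) ∧ r ^ N ≡ e * r ^ (N % 3) [ZMOD 9] := by
  have h3 : r ^ 3 ≡ -1 [ZMOD 9] := by rcases hr with rfl | rfl <;> decide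
  refine ⟨(-1) ^ (N / 3), neg_one_pow_eq_or ℤ _, ?_⟩
  have : r ^ N = (r ^ 3) ^ (N / 3) * r ^ (N % 3) := by
    rw [← pow_mul, ← pow_add, Nat.div_add_mod]
  rw [this]
  exact (h3.pow _).mul_right _

lemma mod_prod (p₁ p₂ p₃ : ℕ)
    (hmod : (p₁ % 9 = 2 ∧ p₂ % 9 = 2 ∧ p₃ % 9 = 2) ∨ (p₁ % 9 = 5 ∧ p₂ % 9 = 5 ∧ p₃ % 9 = 5)) :
    ∃ r : ℤ, (r = 2 ∨ r = 5) ∧ ∀ a b c : ℕ,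
      (p₁ : ℤ) ^ a * p₂ ^ b * p₃ ^ c ≡ r ^ (a + b + c) [ZMOD 9] := by
  have : ∃ r : ℤ, (r = 2 ∨ r = 5) ∧ (p₁ : ℤ) ≡ r [ZMOD 9] ∧ (p₂ : ℤ) ≡ r [ZMOD 9] ∧
      (p₃ : ℤ) ≡ r [ZMOD 9] := by
    unfold Int.ModEq
    rcases hmod with h | h
    · exact ⟨2, by omega, by omega, by omega, by omega⟩
    · exact ⟨5, by omega, by omega, by omega, by omega⟩
  obtain ⟨r, hr, h1, h2, h3⟩ := this
  refine ⟨r, hr, fun a b c => ?_⟩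
  rw [pow_add, pow_add]
  exact ((h1.pow a).mul (h2.pow b)).mul (h3.pow c)

lemma fwd (p₁ p₂ p₃ : ℕ) (hp₁ : p₁.Prime) (hp₂ : p₂.Prime) (hp₃ : p₃.Prime)
    (hne₁₂ : p₁ ≠ p₂) (hne₁₃ : p₁ ≠ p₃)
    (hmod : (p₁ % 9 = 2 ∧ p₂ % 9 = 2 ∧ p₃ % 9 = 2) ∨ (p₁ % 9 = 5 ∧ p₂ % 9 = 5 ∧ p₃ % 9 = 5))
    (β : 𝓞 K) (hβ : β ≠ 0) (hc : ∀ q : 𝓞 K, Prime q → ¬ q ^ 3 ∣ β)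
    (hL : ∀ (q : 𝓞 K) (hq : Prime q), LS hq ((p₁ ^ 2 * p₂ ^ 2 * p₃ ^ 2 : ℕ) : 𝓞 K) β) :
    ∃ (a b c : ℕ) (s : ℤ), (s = 1 ∨ s = -1) ∧ β = (p₁ : 𝓞 K) ^ a * p₂ ^ b * p₃ ^ c * s ∧
      3 ∣ a + b + c := by
  have hpid := IsCyclotomicExtension.Rat.three_pid K
  have hζ := IsCyclotomicExtension.zeta_spec 3 ℚ K
  have P1 : Prime (p₁ : 𝓞 K) := inert p₁ hp₁ (by omega)
  have P2 : Prime (p₂ : 𝓞 K) := inert p₂ hp₂ (by omega)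
  have P3 : Prime (p₃ : 𝓞 K) := inert p₃ hp₃ (by omega)
  obtain ⟨a, β1, hn1, h1⟩ := WfDvdMonoid.max_power_factor hβ P1.irreducible
  have hβ1 : β1 ≠ 0 := fun h => hβ (by rw [h1, h, mul_zero])
  obtain ⟨b, β2, hn2, h2⟩ := WfDvdMonoid.max_power_factor hβ1 P2.irreducible
  have hβ2 : β2 ≠ 0 := fun h => hβ1 (by rw [h2, h, mul_zero])
  obtain ⟨c, β3, hn3, h3⟩ := WfDvdMonoid.max_power_factor hβ2 P3.irreducible
  have hβ3 : β3 ≠ 0 := fun h => hβ2 (by rw [h3, h, mul_zero])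
  have hunit : IsUnit β3 := by
    by_contra hu
    obtain ⟨q, hq, hqd⟩ := WfDvdMonoid.exists_irreducible_factor hu hβ3
    have hqp : Prime q := hq.prime
    have d2 : q ∣ β2 := h3 ▸ hqd.mul_left _
    have d1 : q ∣ β1 := h2 ▸ d2.mul_left _
    have d0 : q ∣ β := h1 ▸ d1.mul_left _
    have hqA : q ∣ ((p₁ ^ 2 * p₂ ^ 2 * p₃ ^ 2 : ℕ) : 𝓞 K) := by
      by_contra hA
      exact nec_good hqp hA (hc q hqp) (hL q hqp) d0
    push_cast at hqA
    rcases hqp.dvd_or_dvd hqA with h | h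
    · rcases hqp.dvd_or_dvd h with h | h
      · exact hn1 ((hqp.associated_of_dvd P1 (hqp.dvd_of_dvd_pow h)).dvd_iff_dvd_left.mp d1)
      · exact hn2 ((hqp.associated_of_dvd P2 (hqp.dvd_of_dvd_pow h)).dvd_iff_dvd_left.mp d2)
    · exact hn3 ((hqp.associated_of_dvd P3 (hqp.dvd_of_dvd_pow h)).dvd_iff_dvd_left.mp hqd)
  obtain ⟨u, rfl⟩ := hunit
  obtain ⟨s, v, hs, huv, hv, hv'⟩ := unit_root hζ u
  have ha : a ≤ 2 := by
    by_contra h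
    exact hc _ P1 (h1 ▸ (pow_dvd_pow _ (by omega)).mul_right _)
  have z1 : Prime (p₁ : ℤ) := Nat.prime_iff_prime_int.mp hp₁
  have n12 : ¬ (p₁ : ℤ) ∣ p₂ := fun h =>
    hne₁₂ ((Nat.prime_dvd_prime_iff_eq hp₁ hp₂).mp (Int.natCast_dvd_natCast.mp h))
  have n13 : ¬ (p₁ : ℤ) ∣ p₃ := fun h =>
    hne₁₃ ((Nat.prime_dvd_prime_iff_eq hp₁ hp₃).mp (Int.natCast_dvd_natCast.mp h))
  have nn : ∀ i j : ℕ, ¬ (p₁ : ℤ) ∣ p₂ ^ i * p₃ ^ j := fun i j h =>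
    (z1.dvd_or_dvd h).elim (fun h => n12 (z1.dvd_of_dvd_pow h)) (fun h => n13 (z1.dvd_of_dvd_pow h))
  have hv1 : v = 1 := by
    refine root_one hζ p₁ hp₁ (by omega) v hv' ?_
    refine nec_p p₁ hp₁ (by omega) P1 v (p₂ ^ b * p₃ ^ c * s) (p₂ ^ 2 * p₃ ^ 2) hv ?_ (nn 2 2) a ha ?_
    · rcases hs with rfl | rfl
      · simpa using nn b c
      · simpa using nn b c
    · convert hL _ P1 using 1
      · push_cast
        ring
      · rw [h1, h2, h3, huv]
        push_cast
        ring
  have hβe : β = (p₁ : 𝓞 K) ^ a * p₂ ^ b * p₃ ^ c * s := by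
    rw [h1, h2, h3, huv, hv1]
    ring
  refine ⟨a, b, c, s, hs, hβe, ?_⟩
  have hlam := hζ.zeta_sub_one_prime'
  obtain ⟨r, hr, hmp⟩ := mod_prod p₁ p₂ p₃ hmod
  obtain ⟨e, he, hmr⟩ := mod_aux r hr (a + b + c)
  have hA : ((p₁ : ℤ) ^ 2 * p₂ ^ 2 * p₃ ^ 2) % 9 = 1 := by
    have := hmp 2 2 2
    unfold Int.ModEq at this
    rw [this]
    rcases hr with rfl | rfl <;> rfl
  have hB := ((hmp a b c).trans hmr).mul_right s
  have key := nec_lam hζ hlam ((p₁ : ℤ) ^ 2 * p₂ ^ 2 * p₃ ^ 2)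
    ((p₁ : ℤ) ^ a * p₂ ^ b * p₃ ^ c * s) hA
  have hL' := hL _ hlam
  rw [hβe] at hL'
  push_cast at hL' key
  unfold Int.ModEq at hB
  generalize (p₁ : ℤ) ^ a * p₂ ^ b * p₃ ^ c * s = B at key hB
  have hlt : (a + b + c) % 3 < 3 := Nat.mod_lt _ (by norm_num)
  rw [Nat.dvd_iff_mod_eq_zero]
  generalize (a + b + c) % 3 = j at hB hlt
  have hB3 : B % 3 ≠ 0 ∧ ((B % 9 = 1 ∨ B % 9 = 8) → j = 0) := by
    interval_cases j <;> rcases hr with rfl | rfl <;> rcases hs with rfl | rfl <;>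
      rcases he with rfl | rfl <;> norm_num at hB <;> omega
  exact hB3.2 (key hB3.1 hL')

lemma fwd_K (p₁ p₂ p₃ : K) (h1 : p₁ ≠ 0) (h2 : p₂ ≠ 0) (h3 : p₃ ≠ 0) (a b c : ℕ)
    (h : 3 ∣ a + b + c) (s : ℤ) (hs : s = 1 ∨ s = -1) (δ : K) :
    ∃ (m n : ℤ) (γ : K), p₁ ^ a * p₂ ^ b * p₃ ^ c * s * δ ^ 3 =
      (p₁ ^ 2 * p₂ ^ 2 * p₃ ^ 2) ^ m * (p₁ * p₂ ^ 2) ^ n * γ ^ 3 := by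
  obtain ⟨k, hk⟩ := h
  have hs3 : ((s : K)) ^ 3 = s := by rcases hs with rfl | rfl <;> norm_num
  refine ⟨-c, a - c, p₁ ^ (c : ℤ) * p₂ ^ ((k : ℤ) - a + c) * p₃ ^ (c : ℤ) * s * δ, ?_⟩
  have e1 : ∀ x : K, x ≠ 0 → ∀ t : ℤ, (x ^ t) ^ 3 = x ^ (t * 3) := fun x _ t => by
    rw [← zpow_natCast, ← zpow_mul]
    norm_num
  have e2 : ∀ x : K, x ≠ 0 → ∀ t : ℤ, (x ^ 2) ^ t = x ^ (2 * t) := fun x _ t => by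
    rw [← zpow_natCast, ← zpow_mul]
    norm_num
  simp only [mul_zpow, mul_pow, e1 _ h1, e1 _ h2, e1 _ h3, e2 _ h1, e2 _ h2, e2 _ h3, hs3]
  have f1 : p₁ ^ a = p₁ ^ (2 * -(c : ℤ)) * p₁ ^ ((a : ℤ) - c) * p₁ ^ ((c : ℤ) * 3) := by
    rw [← zpow_natCast, ← zpow_add₀ h1, ← zpow_add₀ h1]
    congr 1
    ring
  have f2 : p₂ ^ b = p₂ ^ (2 * -(c : ℤ)) * p₂ ^ (2 * ((a : ℤ) - c)) * p₂ ^ (((k : ℤ) - a + c) * 3) := by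
    rw [← zpow_natCast, ← zpow_add₀ h2, ← zpow_add₀ h2]
    congr 1
    omega
  have f3 : p₃ ^ c = p₃ ^ (2 * -(c : ℤ)) * p₃ ^ ((c : ℤ) * 3) := by
    rw [← zpow_natCast, ← zpow_add₀ h3]
    congr 1
    ring
  rw [f1, f2, f3]
  ring

lemma to_int (α : K) (hα : α ≠ 0) : ∃ (x : 𝓞 K) (γ : K), x ≠ 0 ∧ γ ≠ 0 ∧ α = (x : K) * γ ^ 3 := by
  obtain ⟨n, d, hd, rfl⟩ := IsFractionRing.div_surjective (A := 𝓞 K) α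
  have hd0 : d ≠ 0 := nonZeroDivisors.ne_zero hd
  have hd' : algebraMap (𝓞 K) K d ≠ 0 := by simpa using hd0
  have hn0 : n ≠ 0 := by
    rintro rfl
    simp at hα
  refine ⟨n * d ^ 2, (algebraMap (𝓞 K) K d)⁻¹, mul_ne_zero hn0 (pow_ne_zero 2 hd0), inv_ne_zero hd', ?_⟩
  change _ = algebraMap (𝓞 K) K (n * d ^ 2) * _
  rw [map_mul, map_pow]
  field_simp

lemma nat_ndvd {a b c : ℕ} (ha : a.Prime) (hb : b.Prime) (hc : c.Prime) (hab : a ≠ b) (hac : a ≠ c)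
    (i j : ℕ) : ¬ (a : ℤ) ∣ b ^ i * c ^ j := by
  have z1 : Prime (a : ℤ) := Nat.prime_iff_prime_int.mp ha
  have n12 : ¬ (a : ℤ) ∣ b := fun h =>
    hab ((Nat.prime_dvd_prime_iff_eq ha hb).mp (Int.natCast_dvd_natCast.mp h))
  have n13 : ¬ (a : ℤ) ∣ c := fun h =>
    hac ((Nat.prime_dvd_prime_iff_eq ha hc).mp (Int.natCast_dvd_natCast.mp h))
  exact fun h =>
    (z1.dvd_or_dvd h).elim (fun h => n12 (z1.dvd_of_dvd_pow h)) (fun h => n13 (z1.dvd_of_dvd_pow h))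

lemma bwd (p₁ p₂ p₃ : ℕ) (hp₁ : p₁.Prime) (hp₂ : p₂.Prime) (hp₃ : p₃.Prime)
    (hne₁₂ : p₁ ≠ p₂) (hne₂₃ : p₂ ≠ p₃) (hne₁₃ : p₁ ≠ p₃)
    (hmod : (p₁ % 9 = 2 ∧ p₂ % 9 = 2 ∧ p₃ % 9 = 2) ∨ (p₁ % 9 = 5 ∧ p₂ % 9 = 5 ∧ p₃ % 9 = 5))
    (a b c : ℕ) (h3 : 3 ∣ a + b + c) (q : 𝓞 K) (hq : Prime q) :
    LS hq ((p₁ ^ 2 * p₂ ^ 2 * p₃ ^ 2 : ℕ) : 𝓞 K) ((p₁ : 𝓞 K) ^ a * p₂ ^ b * p₃ ^ c) := by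
  by_cases hq3 : q ∣ 3
  · have := LS_three hq hq3 ((p₁ ^ 2 * p₂ ^ 2 * p₃ ^ 2 : ℕ) : 𝓞 K)
      ((p₁ : ℤ) ^ a * p₂ ^ b * p₃ ^ c) ?_
    · push_cast at this ⊢
      exact this
    · obtain ⟨r, hr, hmp⟩ := mod_prod p₁ p₂ p₃ hmod
      obtain ⟨e, he, hmr⟩ := mod_aux r hr (a + b + c)
      have := (hmp a b c).trans hmr
      rw [Nat.dvd_iff_mod_eq_zero.mp h3, pow_zero, mul_one] at this
      rcases he with rfl | rfl
      · exact Or.inl this.symm.dvd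
      · right
        simpa using this.symm.dvd
  by_cases h1 : q ∣ (p₁ : 𝓞 K)
  · convert LS_bad hq p₁ hp₁ (by omega) h1 (p₂ ^ b * p₃ ^ c) (p₂ ^ 2 * p₃ ^ 2)
      (nat_ndvd hp₁ hp₂ hp₃ hne₁₂ hne₁₃ _ _) (nat_ndvd hp₁ hp₂ hp₃ hne₁₂ hne₁₃ _ _) a using 1
    · push_cast
      ring
    · push_cast
      ring
  by_cases h2 : q ∣ (p₂ : 𝓞 K)
  · convert LS_bad hq p₂ hp₂ (by omega) h2 (p₁ ^ a * p₃ ^ c) (p₁ ^ 2 * p₃ ^ 2)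
      (nat_ndvd hp₂ hp₁ hp₃ hne₁₂.symm hne₂₃ _ _) (nat_ndvd hp₂ hp₁ hp₃ hne₁₂.symm hne₂₃ _ _) b using 1
    · push_cast
      ring
    · push_cast
      ring
  by_cases h3 : q ∣ (p₃ : 𝓞 K)
  · convert LS_bad hq p₃ hp₃ (by omega) h3 (p₁ ^ a * p₂ ^ b) (p₁ ^ 2 * p₂ ^ 2)
      (nat_ndvd hp₃ hp₁ hp₂ hne₁₃.symm hne₂₃.symm _ _)
      (nat_ndvd hp₃ hp₁ hp₂ hne₁₃.symm hne₂₃.symm _ _) c using 1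
    · push_cast
      ring
    · push_cast
      ring
  have hnd : ∀ i j k : ℕ, ¬ q ∣ (p₁ : 𝓞 K) ^ i * p₂ ^ j * p₃ ^ k := by
    intro i j k h
    rcases hq.dvd_or_dvd h with h | h
    · exact (hq.dvd_or_dvd h).elim (fun h => h1 (hq.dvd_of_dvd_pow h))
        (fun h => h2 (hq.dvd_of_dvd_pow h))
    · exact h3 (hq.dvd_of_dvd_pow h)
  refine LS_good hq hq3 _ _ ?_ (hnd a b c)
  push_cast
  exact hnd 2 2 2

end Nec

/-- Lemma 2.6: let `p₁, p₂, p₃` be distinct rational primes, all `≡ 2` or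
all `≡ 5 (mod 9)`, and `A = p₁²p₂²p₃²`. A class `[α] ∈ k*/(k*)³` satisfies
`C_{A,α}(k_q) ≠ ∅` for every prime `q` of `ℤ[ζ₃]` iff it lies in the subgroup generated by
`[A]` and `[p₁p₂²]`, i.e. iff `α = A^m · (p₁p₂²)^n · γ³` for some `m, n ∈ ℤ` and `γ ∈ k*`.
(This set is the `√-3`-Selmer group `S(A)`.) -/
theorem stmt7 (K : Type*) [Field K] [NumberField K] [IsCyclotomicExtension {3} ℚ K]
    (p₁ p₂ p₃ : ℕ) (hp₁ : p₁.Prime) (hp₂ : p₂.Prime) (hp₃ : p₃.Prime)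
    (hne₁₂ : p₁ ≠ p₂) (hne₂₃ : p₂ ≠ p₃) (hne₁₃ : p₁ ≠ p₃)
    (hmod : (p₁ % 9 = 2 ∧ p₂ % 9 = 2 ∧ p₃ % 9 = 2) ∨ (p₁ % 9 = 5 ∧ p₂ % 9 = 5 ∧ p₃ % 9 = 5))
    (α : K) (hα : α ≠ 0) :
    (∀ (q : 𝓞 K) (hq : Prime q),
        ∃ x y z : (primeSpec hq).adicCompletion K,
          ¬(x = 0 ∧ y = 0 ∧ z = 0) ∧
          algebraMap K ((primeSpec hq).adicCompletion K) α * x ^ 3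
            + algebraMap K ((primeSpec hq).adicCompletion K) α⁻¹ * y ^ 3
            = algebraMap K ((primeSpec hq).adicCompletion K)
                ((p₁ ^ 2 * p₂ ^ 2 * p₃ ^ 2 : ℕ) : K) * z ^ 3)
      ↔ ∃ (m n : ℤ) (γ : K),
          α = ((p₁ ^ 2 * p₂ ^ 2 * p₃ ^ 2 : ℕ) : K) ^ m * ((p₁ * p₂ ^ 2 : ℕ) : K) ^ n * γ ^ 3 := by
  have c1 : (p₁ : K) ≠ 0 := by exact_mod_cast hp₁.ne_zero
  have c2 : (p₂ : K) ≠ 0 := by exact_mod_cast hp₂.ne_zero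
  have c3 : (p₃ : K) ≠ 0 := by exact_mod_cast hp₃.ne_zero
  have hcast : ((p₁ ^ 2 * p₂ ^ 2 * p₃ ^ 2 : ℕ) : K) =
      ((((p₁ ^ 2 * p₂ ^ 2 * p₃ ^ 2 : ℕ) : 𝓞 K)) : K) := by simp
  constructor
  · intro h
    obtain ⟨x, γ, hx, hγ, hαx⟩ := to_int α hα
    obtain ⟨β, δ, hxb, hβ, hδ, hc⟩ := cubefree_part x hx
    have hδ' : (δ : K) ≠ 0 := by simpa using hδ
    have hαβ : α = (β : K) * (δ * γ) ^ 3 := by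
      rw [hαx, hxb]
      push_cast
      ring
    have hL : ∀ (q : 𝓞 K) (hq : Prime q),
        LS hq ((p₁ ^ 2 * p₂ ^ 2 * p₃ ^ 2 : ℕ) : 𝓞 K) β := by
      intro q hq
      have := h q hq
      rw [hcast] at this
      exact (LS_iff hq _ β hβ (δ * γ) α (mul_ne_zero hδ' hγ) hαβ).mp this
    obtain ⟨a, b, c, s, hs, hβe, h3⟩ := fwd p₁ p₂ p₃ hp₁ hp₂ hp₃ hne₁₂ hne₁₃ hmod β hβ hc hL
    obtain ⟨m, n, γ', hh⟩ := fwd_K (p₁ : K) p₂ p₃ c1 c2 c3 a b c h3 s hs (δ * γ)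
    refine ⟨m, n, γ', ?_⟩
    push_cast
    rw [← hh, hαβ, hβe]
    push_cast
    rfl
  · rintro ⟨m, n, γ, hαe⟩ q hq
    have hγ : γ ≠ 0 := by
      rintro rfl
      simp at hαe
      exact hα hαe
    have hd1 : (((p₁ ^ 2 * p₂ ^ 2 * p₃ ^ 2 : ℕ) : K)) ≠ 0 := by
      push_cast
      positivity
    have hd2 : (((p₁ * p₂ ^ 2 : ℕ) : K)) ≠ 0 := by
      push_cast
      positivity
    obtain ⟨i, m', hm⟩ : ∃ (i : ℕ) (m' : ℤ), m = i + m' * 3 := ⟨(m % 3).toNat, m / 3, by omega⟩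
    obtain ⟨j, n', hn⟩ : ∃ (j : ℕ) (n' : ℤ), n = j + n' * 3 := ⟨(n % 3).toNat, n / 3, by omega⟩
    have hz : ∀ (y : K) (k : ℤ), y ^ (k * 3) = (y ^ k) ^ 3 := fun y k => by
      rw [zpow_mul]
      norm_cast
    have hB := bwd p₁ p₂ p₃ hp₁ hp₂ hp₃ hne₁₂ hne₂₃ hne₁₃ hmod (2 * i + j) (2 * i + 2 * j) (2 * i)
      ⟨2 * i + j, by ring⟩ q hq
    rw [hcast]
    refine (LS_iff hq _ _ ?_ (((p₁ ^ 2 * p₂ ^ 2 * p₃ ^ 2 : ℕ) : K) ^ m' *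
      ((p₁ * p₂ ^ 2 : ℕ) : K) ^ n' * γ) α ?_ ?_).mpr hB
    · have d1 : (p₁ : 𝓞 K) ≠ 0 := by exact_mod_cast hp₁.ne_zero
      have d2 : (p₂ : 𝓞 K) ≠ 0 := by exact_mod_cast hp₂.ne_zero
      have d3 : (p₃ : 𝓞 K) ≠ 0 := by exact_mod_cast hp₃.ne_zero
      positivity
    · exact mul_ne_zero (mul_ne_zero (zpow_ne_zero _ hd1) (zpow_ne_zero _ hd2)) hγ
    · rw [hαe, hm, hn, zpow_add₀ hd1, zpow_add₀ hd2, hz, hz, zpow_natCast, zpow_natCast]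
      generalize (((p₁ ^ 2 * p₂ ^ 2 * p₃ ^ 2 : ℕ) : K)) ^ m' = T1
      generalize (((p₁ * p₂ ^ 2 : ℕ) : K)) ^ n' = T2
      push_cast
      ring
end

section
/- Let p₁, p₂, p₃ be rational primes such that (p₁, p₂, p₃) ≡ (2, 2, 5) (mod 9) or (p₁, p₂, p₃) ≡ (5, 5, 2) (mod 9). Then the equation x³ + p₁y³ = p₂p₃²z³ has no nontrivial ℚ₃-solution. -/
theorem aux_int (p₁ p₂ p₃ : ℕ)
    (hmod : (p₁ % 9 = 2 ∧ p₂ % 9 = 2 ∧ p₃ % 9 = 5) ∨ (p₁ % 9 = 5 ∧ p₂ % 9 = 5 ∧ p₃ % 9 = 2))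
    (x y z : ℤ_[3]) (h1 : x = 1 ∨ y = 1 ∨ z = 1)
    (h : x ^ 3 + (p₁ : ℤ_[3]) * y ^ 3 = (p₂ : ℤ_[3]) * (p₃ : ℤ_[3]) ^ 2 * z ^ 3) : False := by
  have key1 : ∀ a b c : ZMod 9, a ^ 3 + 2 * b ^ 3 = 2 * 5 ^ 2 * c ^ 3 →
      ¬ (a = 1 ∨ b = 1 ∨ c = 1) := by decide +kernel
  have key2 : ∀ a b c : ZMod 9, a ^ 3 + 5 * b ^ 3 = 5 * 2 ^ 2 * c ^ 3 →
      ¬ (a = 1 ∨ b = 1 ∨ c = 1) := by decide +kernel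
  let f : ℤ_[3] →+* ZMod 9 := PadicInt.toZModPow (p := 3) 2
  have hf := congrArg f h
  simp only [map_add, map_mul, map_pow, map_natCast] at hf
  have h1' : f x = 1 ∨ f y = 1 ∨ f z = 1 := by
    rcases h1 with h | h | h <;> simp [h]
  have cast : ∀ p k : ℕ, p % 9 = k → ((p : ZMod 9)) = (k : ZMod 9) := by
    intro p k hk
    rw [← hk, ZMod.natCast_mod]
  rcases hmod with ⟨a, b, c⟩ | ⟨a, b, c⟩
  · rw [cast _ _ a, cast _ _ b, cast _ _ c] at hf
    exact key1 _ _ _ (by exact_mod_cast hf) h1'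
  · rw [cast _ _ a, cast _ _ b, cast _ _ c] at hf
    exact key2 _ _ _ (by exact_mod_cast hf) h1'

theorem aux_rat (p₁ p₂ p₃ : ℕ)
    (hmod : (p₁ % 9 = 2 ∧ p₂ % 9 = 2 ∧ p₃ % 9 = 5) ∨ (p₁ % 9 = 5 ∧ p₂ % 9 = 5 ∧ p₃ % 9 = 2))
    (x y z m : ℚ_[3]) (hm : m ≠ 0) (h1 : x = m ∨ y = m ∨ z = m)
    (hx : ‖x‖ ≤ ‖m‖) (hy : ‖y‖ ≤ ‖m‖) (hz : ‖z‖ ≤ ‖m‖)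
    (h : x ^ 3 + (p₁ : ℚ_[3]) * y ^ 3 = (p₂ : ℚ_[3]) * (p₃ : ℚ_[3]) ^ 2 * z ^ 3) : False := by
  have hn : ∀ t : ℚ_[3], ‖t‖ ≤ ‖m‖ → ‖t / m‖ ≤ 1 := by
    intro t ht
    rw [norm_div]
    exact div_le_one_of_le₀ ht (norm_nonneg _)
  have e : (x / m) ^ 3 + (p₁ : ℚ_[3]) * (y / m) ^ 3
      = (p₂ : ℚ_[3]) * (p₃ : ℚ_[3]) ^ 2 * (z / m) ^ 3 := by
    field_simp
    exact h
  obtain ⟨X, hX⟩ : ∃ X : ℤ_[3], (X : ℚ_[3]) = x / m := ⟨⟨x / m, hn x hx⟩, rfl⟩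
  obtain ⟨Y, hY⟩ : ∃ X : ℤ_[3], (X : ℚ_[3]) = y / m := ⟨⟨y / m, hn y hy⟩, rfl⟩
  obtain ⟨Z, hZ⟩ : ∃ X : ℤ_[3], (X : ℚ_[3]) = z / m := ⟨⟨z / m, hn z hz⟩, rfl⟩
  have one : ∀ (T : ℤ_[3]) (t : ℚ_[3]), (T : ℚ_[3]) = t / m → t = m → T = 1 := by
    intro T t hT ht
    rw [ht, div_self hm] at hT
    exact PadicInt.ext (by exact_mod_cast hT)
  rw [← hX, ← hY, ← hZ] at e
  refine aux_int p₁ p₂ p₃ hmod X Y Z ?_ (PadicInt.ext (by push_cast; exact e))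
  rcases h1 with h | h | h
  · exact Or.inl (one _ _ hX h)
  · exact Or.inr (Or.inl (one _ _ hY h))
  · exact Or.inr (Or.inr (one _ _ hZ h))

/-- if `p₁, p₂, p₃` are rational primes with `(p₁,p₂,p₃) ≡ (2,2,5)` or
`(5,5,2) (mod 9)`, then `x³ + p₁ y³ = p₂ p₃² z³` has no nontrivial `ℚ₃`-solution. -/
theorem stmt9 (p₁ p₂ p₃ : ℕ) (hp₁ : p₁.Prime) (hp₂ : p₂.Prime) (hp₃ : p₃.Prime)
    (hmod : (p₁ % 9 = 2 ∧ p₂ % 9 = 2 ∧ p₃ % 9 = 5) ∨ (p₁ % 9 = 5 ∧ p₂ % 9 = 5 ∧ p₃ % 9 = 2)) :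
    ¬ ∃ x y z : ℚ_[3], ¬(x = 0 ∧ y = 0 ∧ z = 0) ∧
        x ^ 3 + (p₁ : ℚ_[3]) * y ^ 3 = (p₂ : ℚ_[3]) * (p₃ : ℚ_[3]) ^ 2 * z ^ 3 := by

  rintro ⟨x, y, z, hne, h⟩
  have key := aux_rat p₁ p₂ p₃ hmod x y z
  have pos : ∀ t m : ℚ_[3], t ≠ 0 → ‖t‖ ≤ ‖m‖ → m ≠ 0 := by
    rintro t m ht hle rfl
    rw [norm_zero] at hle
    exact ht (norm_le_zero_iff.mp hle)
  have main : ∀ m : ℚ_[3], (x = m ∨ y = m ∨ z = m) → ‖x‖ ≤ ‖m‖ → ‖y‖ ≤ ‖m‖ → ‖z‖ ≤ ‖m‖ →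
      False := by
    intro m h1 hx hy hz
    refine key m ?_ h1 hx hy hz h
    by_cases h0 : x = 0
    · by_cases h0' : y = 0
      · exact pos z m (fun hz => hne ⟨h0, h0', hz⟩) hz
      · exact pos y m h0' hy
    · exact pos x m h0 hx
  rcases le_total ‖x‖ ‖y‖ with a | a <;> rcases le_total ‖y‖ ‖z‖ with b | b <;>
    rcases le_total ‖x‖ ‖z‖ with c | c
  · exact main z (by simp) c b le_rfl
  · exact main z (by simp) (a.trans b) b le_rfl
  · exact main y (by simp) a le_rfl b
  · exact main y (by simp) a le_rfl b
  · exact main z (by simp) c b le_rfl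
  · exact main x (by simp) le_rfl a c
  · exact main x (by simp) le_rfl a (b.trans a)
  · exact main x (by simp) le_rfl a c
end

section
/- Let p be a rational prime with p ≡ 2 (mod 9) or p ≡ 5 (mod 9) (so in particular p ≡ 2 (mod 3) and p is inert in ℤ[ζ₃]). Then there is no (x,y,z) ∈ k_p³ ∖ {(0,0,0)} with ζ₃x³ + ζ₃²y³ = p²z³; that is, the curve ζ₃x³ + ζ₃²y³ = p²z³ has no k_p-rational point. -/
open NumberField IsDedekindDomain

open WithZero in
theorem aux_val {F : Type*} [Field F] (V : Valuation F (WithZero (Multiplicative ℤ)))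
    (u w q x y z : F) (hu : V u = 1) (hw : V w = 1) (hq : V q = exp (-1 : ℤ))
    (hne : ¬(x = 0 ∧ y = 0 ∧ z = 0)) (h : u * x ^ 3 + w * y ^ 3 = q ^ 2 * z ^ 3) :
    V (x / y) ≤ 1 ∧ V (u * (x / y) ^ 3 + w) < 1 := by
  have hq0 : q ≠ 0 := by
    rintro rfl
    rw [map_zero] at hq
    exact exp_ne_zero hq.symm
  have key : ∀ a : F, a ≠ 0 → z ≠ 0 → V a ^ 3 ≠ V (q ^ 2 * z ^ 3) := by
    intro a ha hz he
    have h1 := congrArg log he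
    have hV : V z ≠ 0 := (Valuation.ne_zero_iff _).2 hz
    rw [map_mul, map_pow, map_pow, hq, log_mul (by simp) (by simp [hz]), log_pow, log_pow, log_pow,
      log_exp] at h1
    simp only [nsmul_eq_mul] at h1
    push_cast at h1
    omega
  have hxy : V x = V y := by
    by_contra hxy
    have h3 : V (u * x ^ 3) ≠ V (w * y ^ 3) := by
      simp only [map_mul, map_pow, hu, hw, one_mul]
      intro h4
      exact hxy ((pow_left_inj₀ zero_le zero_le (by norm_num)).1 h4)
    have hadd := Valuation.map_add_of_distinct_val V h3
    rw [h] at hadd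
    simp only [map_mul V u, map_mul V w, map_pow V x, map_pow V y, hu, hw, one_mul] at hadd
    have hz : z ≠ 0 := by
      rintro rfl
      have : V x ^ 3 = 0 ∧ V y ^ 3 = 0 := by
        have h5 : max (V x ^ 3) (V y ^ 3) = 0 := by rw [← hadd]; simp
        constructor
        · exact le_zero_iff.1 (h5 ▸ le_max_left _ _)
        · exact le_zero_iff.1 (h5 ▸ le_max_right _ _)
      apply hxy
      rw [pow_eq_zero_iff (by norm_num)] at this
      rw [pow_eq_zero_iff (by norm_num)] at this
      rw [this.1, this.2]
    have hR : V (q ^ 2 * z ^ 3) ≠ 0 := (Valuation.ne_zero_iff _).2 (mul_ne_zero (pow_ne_zero _ hq0) (pow_ne_zero _ hz))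
    rcases max_choice (V x ^ 3) (V y ^ 3) with hm | hm
    · rw [hm] at hadd
      refine key x ?_ hz hadd.symm
      rintro rfl
      exact hR (by rw [hadd]; simp)
    · rw [hm] at hadd
      refine key y ?_ hz hadd.symm
      rintro rfl
      exact hR (by rw [hadd]; simp)
  have hy : y ≠ 0 := by
    rintro rfl
    have hx : x = 0 := by simpa using hxy
    subst hx
    have : z = 0 := by
      simpa [hq0] using h.symm
    exact hne ⟨rfl, rfl, this⟩
  have hVy : V y ≠ 0 := (Valuation.ne_zero_iff _).2 hy
  have ht : V (x / y) = 1 := by rw [map_div₀, hxy, div_self hVy]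
  refine ⟨ht.le, ?_⟩
  have hle : V (u * (x / y) ^ 3 + w) ≤ 1 := by
    refine (Valuation.map_add _ _ _).trans ?_
    simp [map_mul, map_pow, ht, hu, hw, hxy, hVy]
  refine lt_of_le_of_ne hle ?_
  intro h1
  have h2 : u * (x / y) ^ 3 + w = q ^ 2 * z ^ 3 / y ^ 3 := by
    rw [← h]; field_simp
  rw [h2, map_div₀, map_pow V y, div_eq_one_iff_eq (pow_ne_zero _ hVy)] at h1
  refine key y hy ?_ h1.symm
  rintro rfl
  exact pow_ne_zero 3 hVy (by rw [← h1]; simp)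

theorem aux_field {R : Type*} [CommRing R] (I : Ideal R) [I.IsMaximal]
    (p : ℕ) (hcard : Nat.card (R ⧸ I) = p ^ 2) (hp : p.Prime)
    (hmod : p % 9 = 2 ∨ p % 9 = 5) (hpI : (p : R) ∈ I) (ζ a : R) (hζ : ζ ^ 2 + ζ + 1 = 0)
    (h : a ^ 3 + ζ ∈ I) : False := by
  letI : Field (R ⧸ I) := Ideal.Quotient.field I
  have hfin : Finite (R ⧸ I) := Nat.finite_of_card_ne_zero (by rw [hcard]; exact pow_ne_zero _ hp.ne_zero)
  letI := Fintype.ofFinite (R ⧸ I)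
  set f := Ideal.Quotient.mk I
  have e1 : f a ^ 3 + f ζ = 0 := by
    rw [← map_pow, ← map_add]; exact Ideal.Quotient.eq_zero_iff_mem.2 h
  have e2 : f ζ ^ 2 + f ζ + 1 = 0 := by
    rw [← map_pow, ← map_add, ← map_one f, ← map_add, hζ, map_zero]
  have e3 : (p : R ⧸ I) = 0 := by
    rw [← map_natCast f]; exact Ideal.Quotient.eq_zero_iff_mem.2 hpI
  set b := - f a with hb
  have e4 : b ^ 3 = f ζ := by rw [hb]; linear_combination -e1
  have e5 : f ζ ^ 3 = 1 := by linear_combination (f ζ - 1) * e2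
  have hb0 : b ≠ 0 := by
    intro h0
    rw [h0] at e4
    rw [← e4] at e5
    simp at e5
  have e6 : b ^ 9 = 1 := by rw [← e5, ← e4]; ring
  have e7 : b ^ (p ^ 2 - 1) = 1 := by
    rw [← hcard, Nat.card_eq_fintype_card]
    exact FiniteField.pow_card_sub_one_eq_one b hb0
  have e8 : b ^ 3 = 1 := by
    have d1 := orderOf_dvd_of_pow_eq_one e6
    have d2 := orderOf_dvd_of_pow_eq_one e7
    apply orderOf_dvd_iff_pow_eq_one.1
    have d3 := Nat.dvd_gcd d1 d2
    have hm : (p ^ 2 - 1) % 9 = 3 ∨ (p ^ 2 - 1) % 9 = 6 := by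
      have : p ^ 2 % 9 = 4 ∨ p ^ 2 % 9 = 7 := by
        rcases hmod with h | h <;> simp [Nat.pow_mod, h]
      omega
    have d4 : Nat.gcd ((p ^ 2 - 1) % 9) 9 = 3 := by
      rcases hm with h | h <;> rw [h] <;> rfl
    rw [Nat.gcd_rec, d4] at d3
    exact d3
  rw [e4] at e8
  have e9 : ((3 : ℕ) : R ⧸ I) = 0 := by
    rw [e8] at e2; push_cast; linear_combination e2
  have hc : Nat.Coprime p 3 := by
    rw [Nat.coprime_primes hp Nat.prime_three]
    rintro rfl
    omega
  have := Nat.Coprime.cast (R := R ⧸ I) hc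
  rw [e3, e9] at this
  simp at this

/-- let `p` be a rational prime with `p ≡ 2` or `5 (mod 9)` (so `p ≡ 2
(mod 3)` and `p` is inert in `ℤ[ζ₃]`). Then the curve `ζ₃ x³ + ζ₃² y³ = p² z³` has no
`k_p`-rational point. -/
theorem stmt11 (K : Type*) [Field K] [NumberField K] [IsCyclotomicExtension {3} ℚ K]
    (ζ : K) (hζ : IsPrimitiveRoot ζ 3)
    (p : ℕ) (hp : p.Prime) (hmod : p % 9 = 2 ∨ p % 9 = 5)
    (hpin : Prime ((p : 𝓞 K))) :
    ¬ ∃ x y z : (primeSpec hpin).adicCompletion K,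
        ¬(x = 0 ∧ y = 0 ∧ z = 0) ∧
        algebraMap K ((primeSpec hpin).adicCompletion K) ζ * x ^ 3
          + algebraMap K ((primeSpec hpin).adicCompletion K) (ζ ^ 2) * y ^ 3
          = algebraMap K ((primeSpec hpin).adicCompletion K) ((p : K) ^ 2) * z ^ 3 := by
  obtain ⟨v, hv⟩ : ∃ v, v = primeSpec hpin := ⟨_, rfl⟩
  have hvI : v.asIdeal = Ideal.span {(p : 𝓞 K)} := by rw [hv]; rfl
  rw [← hv]
  rintro ⟨x, y, z, hne, h⟩
  have hζ3 : ζ ^ 2 + ζ + 1 = 0 := by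
    have := hζ.geom_sum_eq_zero (by norm_num)
    simp [Finset.sum_range_succ] at this
    linear_combination this
  have hint : IsIntegral ℤ ζ := hζ.isIntegral (by norm_num)
  let ζ' : 𝓞 K := ⟨ζ, hint⟩
  have hζ' : ζ' ^ 2 + ζ' + 1 = 0 := by
    apply RingOfIntegers.ext
    simp only [map_add, map_pow, map_one, map_zero]
    exact hζ3
  have hVK : ∀ k : K, Valued.v (algebraMap K (v.adicCompletion K) k) = v.valuation K k :=
    fun k => v.valuedAdicCompletion_eq_valuation' k
  have hVζK : v.valuation K ζ = 1 := by
    have : v.valuation K ζ ^ 3 = 1 := by rw [← map_pow, hζ.pow_eq_one, map_one]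
    exact (pow_left_inj₀ zero_le zero_le (by norm_num)).1 (this.trans (one_pow 3).symm)
  have hVζ : Valued.v (algebraMap K (v.adicCompletion K) ζ) = 1 := by rw [hVK, hVζK]
  have hVζ2 : Valued.v (algebraMap K (v.adicCompletion K) (ζ ^ 2)) = 1 := by
    rw [hVK, map_pow, hVζK, one_pow]
  have hVp : Valued.v (algebraMap K (v.adicCompletion K) (p : K)) = WithZero.exp (-1 : ℤ) := by
    rw [hVK, ← v.intValuation_singleton hpin.ne_zero hvI, ← v.valuation_of_algebraMap (K := K)]
    simp
  rw [map_pow _ (p : K)] at h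
  obtain ⟨h1, h2⟩ := aux_val Valued.v _ _ _ x y z hVζ hVζ2 hVp hne h
  set t := x / y
  -- approximate t by an element of K
  obtain ⟨k, hk⟩ : ∃ k : K, Valued.v (t - algebraMap K (v.adicCompletion K) k) < 1 := by
    have hopen : {s : v.adicCompletion K | Valued.v (s - t) < 1} ∈ nhds t := by
      rw [Valued.mem_nhds]
      refine ⟨1, fun s hs => ?_⟩
      simpa using hs
    obtain ⟨k, hk⟩ := ((v.denseRange_algebraMap K).mem_nhds hopen)
    exact ⟨k, by rw [Valuation.map_sub_swap]; exact hk⟩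
  have hk1 : v.valuation K k ≤ 1 := by
    rw [← hVK]
    have : algebraMap K (v.adicCompletion K) k = t - (t - algebraMap K (v.adicCompletion K) k) := by
      ring
    rw [this]
    exact (Valuation.map_sub _ _ _).trans (max_le h1 hk.le)
  obtain ⟨a, ha⟩ := v.exists_valuation_sub_lt_of_integer hk1 1
  rw [Units.val_one] at ha
  let A := algebraMap K (v.adicCompletion K) (algebraMap (𝓞 K) K a)
  have hA : Valued.v A ≤ 1 := by
    rw [hVK]; exact v.valuation_le_one a
  have hta : Valued.v (t - A) < 1 := by
    have : t - A = (t - algebraMap K (v.adicCompletion K) k) -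
        algebraMap K (v.adicCompletion K) (algebraMap (𝓞 K) K a - k) := by
      rw [map_sub]; ring
    rw [this]
    exact (Valuation.map_sub _ _ _).trans_lt (max_lt hk (by rw [hVK]; exact ha))
  set Z := algebraMap K (v.adicCompletion K) ζ with hZ
  have h3 : Valued.v (Z * A ^ 3 + Z ^ 2) < 1 := by
    have : Z * A ^ 3 + Z ^ 2 = (Z * t ^ 3 + algebraMap K (v.adicCompletion K) (ζ ^ 2)) -
        Z * ((t - A) * (t ^ 2 + t * A + A ^ 2)) := by
      rw [map_pow]; ring
    rw [this]
    refine (Valuation.map_sub _ _ _).trans_lt (max_lt h2 ?_)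
    rw [map_mul, map_mul, hVζ, one_mul]
    refine mul_lt_one_of_lt_of_le hta ?_
    refine (Valuation.map_add _ _ _).trans (max_le ((Valuation.map_add _ _ _).trans (max_le ?_ ?_)) ?_)
    · rw [map_pow]; exact pow_le_one' h1 2
    · rw [map_mul]; exact mul_le_one' h1 hA
    · rw [map_pow]; exact pow_le_one' hA 2
  have h4 : Valued.v (A ^ 3 + Z) < 1 := by
    have : Z * A ^ 3 + Z ^ 2 = Z * (A ^ 3 + Z) := by ring
    rwa [this, map_mul, hVζ, one_mul] at h3
  have h5 : a ^ 3 + ζ' ∈ v.asIdeal := by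
    rw [← v.valuation_lt_one_iff_mem (K := K), ← hVK]
    have : A ^ 3 + Z = algebraMap K (v.adicCompletion K) (algebraMap (𝓞 K) K (a ^ 3 + ζ')) := by
      rw [map_add, map_pow, map_add, map_pow]; rfl
    rw [← this]; exact h4
  haveI := v.isMaximal
  refine aux_field v.asIdeal p ?_ hp hmod ?_ ζ' a hζ' h5
  · rw [← Submodule.cardQuot_apply, ← Ideal.absNorm_apply, hvI, Ideal.absNorm_span_singleton]
    have h6 : Module.finrank ℤ (𝓞 K) = 2 := by
      rw [RingOfIntegers.rank, IsCyclotomicExtension.finrank (n := 3) K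
        (Polynomial.cyclotomic.irreducible_rat (by norm_num))]
      rfl
    rw [Algebra.norm_natCast, h6]
    simp
  · rw [hvI]; exact Ideal.mem_span_singleton_self _
end

section
/- Let b and c be units of ℤ₃ (i.e., 3-adic integers not divisible by 3). Then the equation x³ + 3by³ = 9cz³ has no nontrivial ℚ₃-solution. -/
theorem aux12 (x y : ℚ_[3]) (m n : ℤ) (h : ¬ (3 : ℤ) ∣ m - n)
    (e : (3 : ℝ) ^ m * ‖x‖ ^ 3 = (3 : ℝ) ^ n * ‖y‖ ^ 3) : x = 0 ∧ y = 0 := by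
  by_cases hx : x = 0
  · subst hx
    simpa [zpow_ne_zero] using e.symm
  by_cases hy : y = 0
  · subst hy
    simpa [zpow_ne_zero] using e
  exfalso
  rw [Padic.norm_eq_zpow_neg_valuation hx, Padic.norm_eq_zpow_neg_valuation hy] at e
  push_cast at e
  rw [← zpow_natCast, ← zpow_natCast, ← zpow_mul, ← zpow_mul,
    ← zpow_add₀ (by norm_num), ← zpow_add₀ (by norm_num)] at e
  have := zpow_right_injective₀ (by norm_num : (0 : ℝ) < 3) (by norm_num) e
  push_cast at this
  omega

theorem unit12 (b : ℤ_[3]) (hb : ¬ (3 : ℤ_[3]) ∣ b) : ‖(b : ℚ_[3])‖ = 1 := by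
  have h1 := PadicInt.norm_le_one b
  have h2 : ¬ ‖b‖ < 1 := by
    rw [PadicInt.norm_lt_one_iff_dvd]
    exact_mod_cast hb
  rw [← PadicInt.norm_def]
  exact le_antisymm h1 (not_lt.mp h2)

/-- if `b, c` are units of `ℤ₃` (3-adic integers not divisible by `3`),
then `x³ + 3b y³ = 9c z³` has no nontrivial `ℚ₃`-solution. -/
theorem stmt12 (b c : ℤ_[3]) (hb : ¬ (3 : ℤ_[3]) ∣ b) (hc : ¬ (3 : ℤ_[3]) ∣ c) :
    ¬ ∃ x y z : ℚ_[3], ¬(x = 0 ∧ y = 0 ∧ z = 0) ∧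
        x ^ 3 + 3 * (b : ℚ_[3]) * y ^ 3 = 9 * (c : ℚ_[3]) * z ^ 3 := by
  rintro ⟨x, y, z, hne, e⟩
  have hb1 := unit12 b hb
  have hc1 := unit12 c hc
  have hb0 : (b : ℚ_[3]) ≠ 0 := by intro h; simp [h] at hb1
  have hc0 : (c : ℚ_[3]) ≠ 0 := by intro h; simp [h] at hc1
  have h3 : ‖(3 : ℚ_[3])‖ = (3 : ℝ) ^ (-1 : ℤ) := by
    have := Padic.norm_p (p := 3)
    rw [zpow_neg_one]
    exact_mod_cast this
  have h9 : ‖(9 : ℚ_[3])‖ = (3 : ℝ) ^ (-2 : ℤ) := by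
    rw [show (9 : ℚ_[3]) = 3 * 3 by norm_num, norm_mul, h3]; norm_num
  have nA : ‖x ^ 3‖ = (3 : ℝ) ^ (0 : ℤ) * ‖x‖ ^ 3 := by simp
  have nB : ‖3 * (b : ℚ_[3]) * y ^ 3‖ = (3 : ℝ) ^ (-1 : ℤ) * ‖y‖ ^ 3 := by
    rw [norm_mul, norm_mul, norm_pow, hb1, h3, mul_one]
  have nC : ‖9 * (c : ℚ_[3]) * z ^ 3‖ = (3 : ℝ) ^ (-2 : ℤ) * ‖z‖ ^ 3 := by
    rw [norm_mul, norm_mul, norm_pow, hc1, h9, mul_one]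
  apply hne
  by_cases hAB : ‖x ^ 3‖ = ‖3 * (b : ℚ_[3]) * y ^ 3‖
  · rw [nA, nB] at hAB
    obtain ⟨rfl, rfl⟩ := aux12 x y _ _ (by norm_num) hAB
    simpa [hc0] using e.symm
  · have hm := Padic.add_eq_max_of_ne hAB
    rw [e] at hm
    rcases max_choice ‖x ^ 3‖ ‖3 * (b : ℚ_[3]) * y ^ 3‖ with h | h
    · rw [h, nA, nC] at hm
      obtain ⟨rfl, rfl⟩ := aux12 z x _ _ (by norm_num) hm
      simpa [hb0] using e
    · rw [h, nB, nC] at hm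
      obtain ⟨rfl, rfl⟩ := aux12 z y _ _ (by norm_num) hm
      simpa using e
end

section
/- Let i, j, k ∈ {0, 1, 2}. The equation 3^k x³ + 2^i y³ = 2^j z³ has a nontrivial ℚ₃-solution if and only if one of the following holds: (k = 0 and {i, j} ≠ {1, 2}), or k = 1, or (k = 2 and i = j). -/
lemma aux_root : ∃ y : ℚ_[3], 2 * y ^ 3 = 7 := by
  have h3 : ‖(3 : ℤ_[3])‖ = 1 / 3 := by
    have := PadicInt.norm_p (p := 3)
    simpa using this
  have h50 : ‖(50 : ℤ_[3])‖ = 1 := by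
    have := (PadicInt.isUnit_iff (p := 3) (z := ((50 : ℤ) : ℤ_[3]))).1
      (PadicInt.isUnit_iff.2 (by
        rw [PadicInt.norm_intCast_eq_one_iff]; norm_num))
    simpa using this
  have hn : ‖(Polynomial.aeval (5 : ℤ_[3])) (2 * Polynomial.X ^ 3 - 7 : Polynomial ℤ_[3])‖ <
      ‖(Polynomial.aeval (5 : ℤ_[3])) (Polynomial.derivative
        (2 * Polynomial.X ^ 3 - 7 : Polynomial ℤ_[3]))‖ ^ 2 := by
    have e1 : (Polynomial.aeval (5 : ℤ_[3])) (2 * Polynomial.X ^ 3 - 7 : Polynomial ℤ_[3])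
        = 3 ^ 5 := by
      simp; norm_num
    have e2 : (Polynomial.aeval (5 : ℤ_[3])) (Polynomial.derivative
        (2 * Polynomial.X ^ 3 - 7 : Polynomial ℤ_[3])) = 3 * 50 := by
      simp; norm_num
    rw [e1, e2, norm_mul, norm_pow, h3, h50]
    norm_num
  obtain ⟨z, hz, -⟩ := hensels_lemma hn
  refine ⟨z, ?_⟩
  have hz' : 2 * z ^ 3 = 7 := by
    have : 2 * z ^ 3 - 7 = 0 := by simpa using hz
    linear_combination this
  have := congrArg (fun t : ℤ_[3] => (t : ℚ_[3])) hz'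
  push_cast at this
  exact this

lemma aux_div (u v : ℚ_[3]) (hv : v ≠ 0) (h : ‖u‖ ≤ ‖v‖) : ∃ t : ℤ_[3], u = t * v := by
  refine ⟨⟨u / v, ?_⟩, ?_⟩
  · rw [norm_div]
    exact div_le_one_of_le₀ h (norm_nonneg _)
  · simp [hv]

lemma aux_int_s13 (i j k : ℕ) (x y z : ℚ_[3]) (h0 : ¬(x = 0 ∧ y = 0 ∧ z = 0))
    (h : (3 : ℚ_[3]) ^ k * x ^ 3 + (2 : ℚ_[3]) ^ i * y ^ 3 = (2 : ℚ_[3]) ^ j * z ^ 3) :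
    ∃ x y z : ZMod 27, (x = 1 ∨ y = 1 ∨ z = 1) ∧
      3 ^ k * x ^ 3 + 2 ^ i * y ^ 3 = 2 ^ j * z ^ 3 := by
  have key : ∀ v : ℚ_[3], ‖x‖ ≤ ‖v‖ → ‖y‖ ≤ ‖v‖ → ‖z‖ ≤ ‖v‖ → (v = x ∨ v = y ∨ v = z) →
      ∃ x y z : ZMod 27, (x = 1 ∨ y = 1 ∨ z = 1) ∧
      3 ^ k * x ^ 3 + 2 ^ i * y ^ 3 = 2 ^ j * z ^ 3 := by
    intro v hx hy hz hv
    have hv0 : v ≠ 0 := by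
      rintro rfl
      simp only [norm_zero, norm_le_zero_iff] at hx hy hz
      exact h0 ⟨hx, hy, hz⟩
    obtain ⟨a, ha⟩ := aux_div x v hv0 hx
    obtain ⟨b, hb⟩ := aux_div y v hv0 hy
    obtain ⟨c, hc⟩ := aux_div z v hv0 hz
    have one : ∀ t : ℤ_[3], v = t * v → t = 1 := by
      intro t ht
      have : (t : ℚ_[3]) = 1 := mul_right_cancel₀ hv0 (by rw [← ht, one_mul])
      exact Subtype.coe_injective (by simpa using this)
    have e : (3 : ℤ_[3]) ^ k * a ^ 3 + 2 ^ i * b ^ 3 = 2 ^ j * c ^ 3 := by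
      have : (3 : ℚ_[3]) ^ k * (a : ℚ_[3]) ^ 3 + 2 ^ i * (b : ℚ_[3]) ^ 3
          = 2 ^ j * (c : ℚ_[3]) ^ 3 := by
        apply mul_right_cancel₀ (pow_ne_zero 3 hv0)
        rw [ha, hb, hc] at h
        linear_combination h
      apply Subtype.coe_injective
      push_cast
      exact this
    let f : ℤ_[3] →+* ZMod 27 := PadicInt.toZModPow (p := 3) 3
    refine ⟨f a, f b, f c, ?_, ?_⟩
    · rcases hv with r | r | r
      · left; rw [one a (by rw [← ha, r]), map_one]
      · right; left; rw [one b (by rw [← hb, r]), map_one]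
      · right; right; rw [one c (by rw [← hc, r]), map_one]
    · have := congrArg f e
      simpa only [map_add, map_mul, map_pow, map_ofNat] using this
  rcases le_total ‖x‖ ‖y‖ with h1 | h1
  · rcases le_total ‖y‖ ‖z‖ with h2 | h2
    · exact key z (h1.trans h2) h2 le_rfl (by simp)
    · exact key y h1 le_rfl h2 (by simp)
  · rcases le_total ‖x‖ ‖z‖ with h2 | h2
    · exact key z h2 (h1.trans h2) le_rfl (by simp)
    · exact key x le_rfl h1 h2 (by simp)

lemma aux_mod (A B C : ZMod 27)
    (hX : ∀ s t : ZMod 27, A + B * s ^ 3 ≠ C * t ^ 3)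
    (hY : ∀ s t : ZMod 27, A * s ^ 3 + B ≠ C * t ^ 3)
    (hZ : ∀ s t : ZMod 27, A * s ^ 3 + B * t ^ 3 ≠ C) :
    ¬ ∃ x y z : ZMod 27, (x = 1 ∨ y = 1 ∨ z = 1) ∧ A * x ^ 3 + B * y ^ 3 = C * z ^ 3 := by
  rintro ⟨x, y, z, rfl | rfl | rfl, h⟩
  · exact hX y z (by simpa using h)
  · exact hY x z (by simpa using h)
  · exact hZ x y (by simpa using h)

lemma aux_no (i j k : ℕ)
    (h : ¬ ∃ x y z : ZMod 27, (x = 1 ∨ y = 1 ∨ z = 1) ∧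
      3 ^ k * x ^ 3 + 2 ^ i * y ^ 3 = 2 ^ j * z ^ 3) :
    ¬ ∃ x y z : ℚ_[3], ¬(x = 0 ∧ y = 0 ∧ z = 0) ∧
        (3 : ℚ_[3]) ^ k * x ^ 3 + (2 : ℚ_[3]) ^ i * y ^ 3 = (2 : ℚ_[3]) ^ j * z ^ 3 := by
  rintro ⟨x, y, z, h0, e⟩
  exact h (aux_int_s13 i j k x y z h0 e)

/-- for `i, j, k ∈ {0, 1, 2}`, the equation `3^k x³ + 2^i y³ = 2^j z³`
has a nontrivial `ℚ₃`-solution iff (`k = 0` and `{i,j} ≠ {1,2}`), or `k = 1`, or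
(`k = 2` and `i = j`). -/
theorem stmt13 (i j k : ℕ) (hi : i ≤ 2) (hj : j ≤ 2) (hk : k ≤ 2) :
    (∃ x y z : ℚ_[3], ¬(x = 0 ∧ y = 0 ∧ z = 0) ∧
        (3 : ℚ_[3]) ^ k * x ^ 3 + (2 : ℚ_[3]) ^ i * y ^ 3 = (2 : ℚ_[3]) ^ j * z ^ 3)
      ↔ (k = 0 ∧ ({i, j} : Set ℕ) ≠ {1, 2}) ∨ k = 1 ∨ (k = 2 ∧ i = j) := by
  constructor
  · intro h
    by_contra hc
    have hcases : (k = 0 ∧ i = 1 ∧ j = 2) ∨ (k = 0 ∧ i = 2 ∧ j = 1) ∨ (k = 2 ∧ i ≠ j) := by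
      by_cases h12 : (i = 1 ∧ j = 2) ∨ (i = 2 ∧ j = 1)
      · by_cases k = 1 <;> grind
      · have : k ≠ 0 := by
          rintro rfl
          apply hc
          left
          refine ⟨rfl, fun he => h12 ?_⟩
          have a1 : i ∈ ({1, 2} : Set ℕ) := he ▸ (by simp)
          have a2 : j ∈ ({1, 2} : Set ℕ) := he ▸ (by simp)
          have a3 : 1 ∈ ({i, j} : Set ℕ) := he.symm ▸ (by simp)
          have a4 : 2 ∈ ({i, j} : Set ℕ) := he.symm ▸ (by simp)
          simp only [Set.mem_insert_iff, Set.mem_singleton_iff] at a1 a2 a3 a4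
          omega
        omega
    revert h
    apply aux_no
    apply aux_mod
    all_goals
      clear hc
      revert hcases
      interval_cases k <;> interval_cases i <;> interval_cases j <;>
        first
        | (intro hcases; exfalso; omega)
        | (intro _; decide +kernel)
  · intro h
    by_cases hij : i = j
    · subst hij
      exact ⟨0, 1, 1, by simp, by simp⟩
    rcases h with ⟨rfl, h⟩ | rfl | ⟨_, h⟩
    · by_cases h0 : i = 0
      · subst h0
        exact ⟨1, -1, 0, by simp, by norm_num⟩
      by_cases h1 : j = 0
      · subst h1
        exact ⟨1, 0, 1, by simp, by norm_num⟩
      exfalso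
      have : (i = 1 ∧ j = 2) ∨ (i = 2 ∧ j = 1) := by omega
      rcases this with ⟨rfl, rfl⟩ | ⟨rfl, rfl⟩
      · exact h rfl
      · exact h (Set.pair_comm 2 1)
    · obtain ⟨r, hr⟩ := aux_root
      interval_cases i <;> interval_cases j <;>
        first
        | omega
        | (refine ⟨1, -1, 1, by simp, ?_⟩; norm_num; done)
        | (refine ⟨1, 1, 1, by simp, ?_⟩; norm_num; done)
        | (refine ⟨-1, 1, 1, by simp, ?_⟩; norm_num; done)
        | (refine ⟨-1, r, 1, by simp, ?_⟩; linear_combination hr; done)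
        | (refine ⟨1, 1, r, by simp, ?_⟩; linear_combination -hr; done)
    · exact absurd h hij
end

section
/- Let p₁, p₂, p₃ be rational primes each congruent to 2 or 5 modulo 9. Then for every rational prime p, the equation x₁³ + p₁p₂x₂³ + p₂p₃x₃³ + p₃p₁x₄³ = 0 has a solution (x₁,x₂,x₃,x₄) ∈ ℚ_p⁴ ∖ {(0,0,0,0)}. -/
open Polynomial in
lemma aux_hensel {p : ℕ} [Fact p.Prime] (a r x : ℤ_[p])
    (h : ‖a * x ^ 3 + r‖ < ‖3 * a * x ^ 2‖ ^ 2) :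
    ∃ z : ℤ_[p], a * z ^ 3 + r = 0 ∧ ‖z - x‖ < ‖3 * a * x ^ 2‖ := by
  have e : ∀ y : ℤ_[p], (C a * X ^ 3 + C r : ℤ_[p][X]).aeval y = a * y ^ 3 + r := by
    intro y; simp
  have e' : ∀ y : ℤ_[p], (derivative (C a * X ^ 3 + C r : ℤ_[p][X])).aeval y = 3 * a * y ^ 2 := by
    intro y; simp; ring
  obtain ⟨z, h1, h2, -⟩ := hensels_lemma (F := (C a * X ^ 3 + C r : ℤ_[p][X])) (a := x)
    (by rw [e, e']; exact h)
  rw [e] at h1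
  rw [e'] at h2
  exact ⟨z, h1, h2⟩

lemma aux_norm {p : ℕ} [Fact p.Prime] (x : ℤ_[p]) :
    PadicInt.toZMod x = 0 ↔ ‖x‖ < 1 := by
  rw [← RingHom.mem_ker, PadicInt.ker_toZMod, IsLocalRing.mem_maximalIdeal, PadicInt.mem_nonunits]

lemma aux_norm' {p : ℕ} [Fact p.Prime] (x : ℤ_[p]) (h : PadicInt.toZMod x ≠ 0) : ‖x‖ = 1 := by
  rw [Ne, aux_norm] at h
  exact le_antisymm (PadicInt.norm_le_one x) (not_lt.1 h)

lemma aux_A {p : ℕ} [Fact p.Prime] (hp : p ≠ 3) (a r x : ℤ_[p])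
    (ha : PadicInt.toZMod a ≠ 0) (hx : PadicInt.toZMod x ≠ 0)
    (h : PadicInt.toZMod (a * x ^ 3 + r) = 0) : ∃ z : ℤ_[p], z ≠ 0 ∧ a * z ^ 3 + r = 0 := by
  have h3 : (3 : ZMod p) ≠ 0 := by
    intro h
    have : ((3 : ℕ) : ZMod p) = 0 := by exact_mod_cast h
    rw [ZMod.natCast_eq_zero_iff] at this
    exact hp ((Nat.prime_dvd_prime_iff_eq Fact.out Nat.prime_three).1 this)
  have hd : ‖3 * a * x ^ 2‖ = 1 := by
    apply aux_norm'
    simp only [map_mul, map_pow, map_ofNat]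
    exact mul_ne_zero (mul_ne_zero h3 ha) (pow_ne_zero _ hx)
  obtain ⟨z, h1, h2⟩ := aux_hensel a r x (by rw [hd, one_pow]; exact (aux_norm _).1 h)
  refine ⟨z, ?_, h1⟩
  rintro rfl
  rw [hd, zero_sub, norm_neg, aux_norm' x hx] at h2
  exact lt_irrefl _ h2

lemma aux_B (a b : ℕ) (h : a % 9 = b % 9) (ha : a % 3 ≠ 0) : ∃ z : ℤ_[3], a * z ^ 3 + -b = 0 := by
  have key : ∃ x : ℕ, x % 3 ≠ 0 ∧ (27 : ℤ) ∣ a * x ^ 3 - b := by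
    have : (a - b : ℤ) % 27 = 0 ∨ (64 * a - b : ℤ) % 27 = 0 ∨ (343 * a - b : ℤ) % 27 = 0 := by
      obtain ⟨k, hk⟩ : ∃ k : ℤ, (b : ℤ) = a + 9 * k := ⟨((b : ℤ) - a) / 9, by omega⟩
      have hk3 : k % 3 = 0 ∨ k % 3 = 1 ∨ k % 3 = 2 := by omega
      have ha3 : a % 3 = 1 ∨ a % 3 = 2 := by omega
      rcases hk3 with h1 | h1 | h1 <;> rcases ha3 with h2 | h2 <;>
        first
        | (left; omega)
        | (right; left; omega)
        | (right; right; omega)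
    rcases this with h | h | h
    · exact ⟨1, by norm_num, by push_cast; omega⟩
    · exact ⟨4, by norm_num, by push_cast; omega⟩
    · exact ⟨7, by norm_num, by push_cast; omega⟩
  obtain ⟨x, hx, hd⟩ := key
  have u : ∀ n : ℕ, n % 3 ≠ 0 → ‖(n : ℤ_[3])‖ = 1 := by
    intro n hn
    apply aux_norm'
    rw [map_natCast, Ne, ZMod.natCast_eq_zero_iff]
    omega
  have h3 : ‖(3 : ℤ_[3])‖ = 3⁻¹ := by
    have := PadicInt.norm_p (p := 3)
    exact_mod_cast this
  have hlt : ‖(a : ℤ_[3]) * x ^ 3 + -b‖ < ‖(3 : ℤ_[3]) * a * x ^ 2‖ ^ 2 := by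
    have : ‖((a * x ^ 3 - b : ℤ) : ℤ_[3])‖ ≤ (3 : ℕ) ^ (-(3 : ℕ) : ℤ) := by
      rw [PadicInt.norm_int_le_pow_iff_dvd]; exact_mod_cast hd
    rw [norm_mul, norm_mul, norm_pow, u a ha, u x hx, h3, ← sub_eq_add_neg]
    push_cast at this
    refine lt_of_le_of_lt this ?_
    norm_num [zpow_neg]
  obtain ⟨z, hz, -⟩ := aux_hensel (a : ℤ_[3]) (-b) x hlt
  exact ⟨z, hz⟩

lemma aux_CW {p : ℕ} [Fact p.Prime] (a : Fin 4 → ZMod p) :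
    ∃ y : Fin 4 → ZMod p, y ≠ 0 ∧ ∑ i, a i * y i ^ 3 = 0 := by
  classical
  set f : MvPolynomial (Fin 4) (ZMod p) :=
    ∑ i, MvPolynomial.C (a i) * MvPolynomial.X i ^ 3 with hf
  have hev : ∀ y, MvPolynomial.eval y f = ∑ i, a i * y i ^ 3 := by
    intro y; simp [hf]
  have hdeg : f.totalDegree < Fintype.card (Fin 4) := by
    have : f.totalDegree ≤ 3 := by
      apply MvPolynomial.totalDegree_finsetSum_le
      intro i _
      refine (MvPolynomial.totalDegree_mul _ _).trans ?_
      simp [MvPolynomial.totalDegree_X_pow]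
    simpa using Nat.lt_succ_of_le this
  have hd := char_dvd_card_solutions p hdeg
  have h0 : MvPolynomial.eval 0 f = 0 := by rw [hev]; simp
  have hpos : 0 < Fintype.card {x : Fin 4 → ZMod p // MvPolynomial.eval x f = 0} :=
    Fintype.card_pos_iff.2 ⟨⟨0, h0⟩⟩
  have h1 : 1 < Fintype.card {x : Fin 4 → ZMod p // MvPolynomial.eval x f = 0} :=
    lt_of_lt_of_le (Fact.out : p.Prime).one_lt (Nat.le_of_dvd hpos hd)
  obtain ⟨⟨y, hy⟩, hne⟩ := Fintype.exists_ne_of_one_lt_card h1 ⟨0, h0⟩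
  exact ⟨y, fun h => hne (Subtype.ext h), by rw [← hev]; exact hy⟩

lemma aux_D {p : ℕ} [Fact p.Prime] (hp : p ≠ 3) (a : Fin 4 → ℕ) (ha : ∀ i, ¬ p ∣ a i) :
    ∃ y : Fin 4 → ℤ_[p], y ≠ 0 ∧ ∑ i, (a i : ℤ_[p]) * y i ^ 3 = 0 := by
  obtain ⟨y, hy, hs⟩ := aux_CW (p := p) (fun i => (a i : ZMod p))
  obtain ⟨i, hi⟩ := Function.ne_iff.1 hy
  let w : Fin 4 → ℤ_[p] := fun j => ((y j).val : ℤ_[p])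
  have hw : ∀ j, PadicInt.toZMod (w j) = y j := by intro j; simp [w]
  have hsplit := fun (v : Fin 4 → ℤ_[p]) =>
    (Finset.add_sum_erase Finset.univ (fun j => (a j : ℤ_[p]) * v j ^ 3) (Finset.mem_univ i))
  obtain ⟨z, hz, he⟩ := aux_A hp (a i : ℤ_[p])
    (∑ j ∈ Finset.univ.erase i, (a j : ℤ_[p]) * w j ^ 3) (w i)
    (by rw [map_natCast, Ne, ZMod.natCast_eq_zero_iff]; exact ha i)
    (by rw [hw]; exact hi)
    (by rw [hsplit w, map_sum]; simpa [hw] using hs)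
  refine ⟨Function.update w i z, ?_, ?_⟩
  · intro h
    apply hz
    simpa using congrFun h i
  · rw [← hsplit, ← he]
    congr 1
    · simp
    · apply Finset.sum_congr rfl
      intro j hj
      rw [Function.update_of_ne (Finset.ne_of_mem_erase hj)]

lemma aux_E {p : ℕ} [Fact p.Prime] (hp : p % 3 = 2) (b : ℕ) (hb : ¬ p ∣ b) :
    ∃ z : ℤ_[p], z ^ 3 + b = 0 := by
  have hb' : (b : ZMod p) ≠ 0 := by rwa [Ne, ZMod.natCast_eq_zero_iff]
  have hu : (-(b : ZMod p)) ≠ 0 := neg_ne_zero.2 hb'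
  obtain ⟨k, hk⟩ : ∃ k, p = 3 * k + 2 := ⟨p / 3, by omega⟩
  have hc : ((-(b : ZMod p)) ^ (2 * k + 1)) ^ 3 = -(b : ZMod p) := by
    rw [← pow_mul, show (2 * k + 1) * 3 = (p - 1) * 2 + 1 by omega, pow_succ, pow_mul,
      ZMod.pow_card_sub_one_eq_one hu, one_pow, one_mul]
  obtain ⟨z, -, h⟩ := aux_A (p := p) (by omega) 1 (b : ℤ_[p]) ((-(b : ℤ_[p])) ^ (2 * k + 1))
    (by simp) (by simpa using hb') (by
      rw [one_mul, map_add, map_pow, map_pow, map_neg, map_natCast, hc]; simp)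
  exact ⟨z, by simpa using h⟩

lemma aux_cast {p : ℕ} [Fact p.Prime] (a b c : ℕ)
    (h : ∃ x y z w : ℤ_[p], ¬(x = 0 ∧ y = 0 ∧ z = 0 ∧ w = 0) ∧
      x ^ 3 + a * y ^ 3 + b * z ^ 3 + c * w ^ 3 = 0) :
    ∃ x₁ x₂ x₃ x₄ : ℚ_[p], ¬(x₁ = 0 ∧ x₂ = 0 ∧ x₃ = 0 ∧ x₄ = 0) ∧
        x₁ ^ 3 + (a : ℚ_[p]) * x₂ ^ 3 + (b : ℚ_[p]) * x₃ ^ 3 + (c : ℚ_[p]) * x₄ ^ 3 = 0 := by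
  obtain ⟨x, y, z, w, h1, h2⟩ := h
  refine ⟨x, y, z, w, ?_, ?_⟩
  · simpa using h1
  · exact_mod_cast congrArg (fun t : ℤ_[p] => (t : ℚ_[p])) h2

/-- (Remark 0.2 i)): if `p₁, p₂, p₃` are rational primes each `≡ 2` or
`5 (mod 9)`, then for every rational prime `p` the surface
`x₁³ + p₁p₂ x₂³ + p₂p₃ x₃³ + p₃p₁ x₄³ = 0` has a nontrivial `ℚ_p`-point. -/
theorem stmt14 (p₁ p₂ p₃ : ℕ) (hp₁ : p₁.Prime) (hp₂ : p₂.Prime) (hp₃ : p₃.Prime)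
    (h₁ : p₁ % 9 = 2 ∨ p₁ % 9 = 5) (h₂ : p₂ % 9 = 2 ∨ p₂ % 9 = 5)
    (h₃ : p₃ % 9 = 2 ∨ p₃ % 9 = 5) :
    ∀ (p : ℕ) [Fact p.Prime],
      ∃ x₁ x₂ x₃ x₄ : ℚ_[p], ¬(x₁ = 0 ∧ x₂ = 0 ∧ x₃ = 0 ∧ x₄ = 0) ∧
        x₁ ^ 3 + ((p₁ * p₂ : ℕ) : ℚ_[p]) * x₂ ^ 3 + ((p₂ * p₃ : ℕ) : ℚ_[p]) * x₃ ^ 3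
          + ((p₃ * p₁ : ℕ) : ℚ_[p]) * x₄ ^ 3 = 0 := by
  intro p _
  apply aux_cast
  have hp : p.Prime := Fact.out
  have m3 : ∀ q : ℕ, (q % 9 = 2 ∨ q % 9 = 5) → q % 3 = 2 := by intro q h; omega
  by_cases hp3 : p = 3
  · subst hp3
    have n3 : ∀ q r : ℕ, q % 3 = 2 → r % 3 = 2 → (q * r) % 3 ≠ 0 := by
      intro q r hq hr; rw [Nat.mul_mod, hq, hr]; norm_num
    have hpig : p₁ % 9 = p₂ % 9 ∨ p₁ % 9 = p₃ % 9 ∨ p₂ % 9 = p₃ % 9 := by omega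
    rcases hpig with h | h | h
    · obtain ⟨z, hz⟩ := aux_B (p₃ * p₁) (p₂ * p₃)
        (by rw [mul_comm p₂, Nat.mul_mod, h, ← Nat.mul_mod]) (n3 _ _ (m3 _ h₃) (m3 _ h₁))
      exact ⟨0, 0, -1, z, by simp, by linear_combination hz⟩
    · obtain ⟨z, hz⟩ := aux_B (p₁ * p₂) (p₂ * p₃)
        (by rw [mul_comm p₂, Nat.mul_mod, h, ← Nat.mul_mod]) (n3 _ _ (m3 _ h₁) (m3 _ h₂))
      exact ⟨0, z, -1, 0, by simp, by linear_combination hz⟩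
    · obtain ⟨z, hz⟩ := aux_B (p₁ * p₂) (p₃ * p₁)
        (by rw [mul_comm p₃, Nat.mul_mod, h, ← Nat.mul_mod]) (n3 _ _ (m3 _ h₁) (m3 _ h₂))
      exact ⟨0, z, 0, -1, by simp, by linear_combination hz⟩
  by_cases e12 : p₁ = p₂
  · subst e12
    exact ⟨0, 0, 1, -1, by simp, by push_cast; ring⟩
  by_cases e13 : p₁ = p₃
  · subst e13
    exact ⟨0, 1, -1, 0, by simp, by push_cast; ring⟩
  by_cases e23 : p₂ = p₃
  · subst e23
    exact ⟨0, 1, 0, -1, by simp, by push_cast; ring⟩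
  have nd : ∀ q r : ℕ, q.Prime → r.Prime → p ≠ q → p ≠ r → ¬ p ∣ q * r := by
    intro q r hq hr h h' hd
    rcases hp.dvd_mul.1 hd with hd | hd
    · exact h ((Nat.prime_dvd_prime_iff_eq hp hq).1 hd)
    · exact h' ((Nat.prime_dvd_prime_iff_eq hp hr).1 hd)
  by_cases f1 : p = p₁
  · obtain ⟨z, hz⟩ := aux_E (p := p) (f1 ▸ m3 _ h₁) (p₂ * p₃)
      (nd _ _ hp₂ hp₃ (f1 ▸ e12) (f1 ▸ e13))
    exact ⟨z, 0, 1, 0, by simp, by linear_combination hz⟩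
  by_cases f2 : p = p₂
  · obtain ⟨z, hz⟩ := aux_E (p := p) (f2 ▸ m3 _ h₂) (p₃ * p₁)
      (nd _ _ hp₃ hp₁ (f2 ▸ e23) f1)
    exact ⟨z, 0, 0, 1, by simp, by linear_combination hz⟩
  by_cases f3 : p = p₃
  · obtain ⟨z, hz⟩ := aux_E (p := p) (f3 ▸ m3 _ h₃) (p₁ * p₂) (nd _ _ hp₁ hp₂ f1 f2)
    exact ⟨z, 1, 0, 0, by simp, by linear_combination hz⟩
  obtain ⟨y, hy, hs⟩ := aux_D (p := p) hp3 ![1, p₁ * p₂, p₂ * p₃, p₃ * p₁] (by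
    intro i
    fin_cases i
    · simpa using hp.one_lt.ne'
    · exact nd _ _ hp₁ hp₂ f1 f2
    · exact nd _ _ hp₂ hp₃ f2 f3
    · exact nd _ _ hp₃ hp₁ f3 f1)
  refine ⟨y 0, y 1, y 2, y 3, ?_, ?_⟩
  · rintro ⟨h0, h1, h2, h3⟩
    apply hy
    funext i
    fin_cases i <;> simpa
  · simpa [Fin.sum_univ_four] using hs
end

section
/- Let K be a quadratic extension of ℚ (for instance K = ℚ(ζ₃)) and let a₁, a₂, a₃, a₄ be nonzero rational numbers. If the equation a₁x₁³ + a₂x₂³ + a₃x₃³ + a₄x₄³ = 0 has a solution (x₁,x₂,x₃,x₄) ∈ K⁴ ∖ {(0,0,0,0)}, then it has a solution in ℚ⁴ ∖ {(0,0,0,0)}. -/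
lemma quad_gen (K : Type*) [Field K] [Algebra ℚ K] (hK : Module.finrank ℚ K = 2) :
    ∃ (θ : K) (d : ℚ), d ≠ 0 ∧ θ ^ 2 = algebraMap ℚ K d ∧
      (∀ p q : ℚ, algebraMap ℚ K p + algebraMap ℚ K q * θ = 0 → p = 0 ∧ q = 0) ∧
      ∀ x : K, ∃ p q : ℚ, x = algebraMap ℚ K p + algebraMap ℚ K q * θ := by
  have hx : ∃ x : K, ∀ r : ℚ, algebraMap ℚ K r ≠ x := by
    by_contra! hc
    have := finrank_le_one (R := ℚ) (M := K) 1 (fun w => by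
      obtain ⟨r, hr⟩ := hc w
      exact ⟨r, by rw [Algebra.smul_def, mul_one, hr]⟩)
    omega
  obtain ⟨x, hx⟩ := hx
  have hli0 : ∀ p q : ℚ, algebraMap ℚ K p + algebraMap ℚ K q * x = 0 → p = 0 ∧ q = 0 := by
    intro p q h
    have hq : q = 0 := by
      by_contra hq
      have hq' : algebraMap ℚ K q ≠ 0 := (map_ne_zero _).mpr hq
      apply hx (-p / q)
      rw [map_div₀, map_neg, div_eq_iff hq']
      linear_combination -h
    rw [hq, map_zero, zero_mul, add_zero] at h
    exact ⟨(map_eq_zero _).mp h, hq⟩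
  have hli : LinearIndependent ℚ ![(1 : K), x] := by
    rw [LinearIndependent.pair_iff]
    intro s t h
    apply hli0
    simpa [Algebra.smul_def] using h
  have hspan : ∀ y : K, ∃ p q : ℚ, y = algebraMap ℚ K p + algebraMap ℚ K q * x := by
    intro y
    haveI : FiniteDimensional ℚ K := FiniteDimensional.of_finrank_pos (by omega)
    have htop := hli.span_eq_top_of_card_eq_finrank' (by simp [hK])
    have hy : y ∈ Submodule.span ℚ (Set.range ![(1 : K), x]) := by rw [htop]; trivial
    simp only [Matrix.range_cons, Matrix.range_empty, Set.union_empty,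
      Set.singleton_union, Submodule.mem_span_pair] at hy
    obtain ⟨p, q, h⟩ := hy
    exact ⟨p, q, by rw [← h]; simp [Algebra.smul_def]⟩
  obtain ⟨v, u, huv⟩ := hspan (x ^ 2)
  have h2 : algebraMap ℚ K (u / 2) * 2 = algebraMap ℚ K u := by
    have : algebraMap ℚ K 2 = 2 := map_ofNat _ 2
    rw [← this, ← map_mul]; congr 1; ring
  have hsq : (x - algebraMap ℚ K (u / 2)) ^ 2 = algebraMap ℚ K (v + (u / 2) ^ 2) := by
    rw [map_add, map_pow]
    linear_combination huv - x * h2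
  refine ⟨x - algebraMap ℚ K (u / 2), v + (u / 2) ^ 2, ?_, hsq, ?_, ?_⟩
  · intro h0
    rw [h0, map_zero] at hsq
    exact hx (u / 2) (sub_eq_zero.mp (pow_eq_zero_iff (two_ne_zero) |>.mp hsq)).symm
  · intro p q h
    obtain ⟨h1, h2⟩ := hli0 (p - q * (u / 2)) q (by
      rw [map_sub, map_mul]; linear_combination h)
    subst h2
    exact ⟨by simpa using h1, rfl⟩
  · intro y
    obtain ⟨p, q, h⟩ := hspan y
    exact ⟨p + q * (u / 2), q, by rw [map_add, map_mul]; linear_combination h⟩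

/-- let `K` be a quadratic extension of `ℚ` and `a₁, a₂, a₃, a₄ ∈ ℚ*`.
If `a₁x₁³ + a₂x₂³ + a₃x₃³ + a₄x₄³ = 0` has a nontrivial `K`-point, then it has a
nontrivial `ℚ`-point. -/
theorem stmt16 (K : Type*) [Field K] [Algebra ℚ K] (hK : Module.finrank ℚ K = 2)
    (a₁ a₂ a₃ a₄ : ℚ) (ha₁ : a₁ ≠ 0) (ha₂ : a₂ ≠ 0) (ha₃ : a₃ ≠ 0) (ha₄ : a₄ ≠ 0)
    (h : ∃ x₁ x₂ x₃ x₄ : K, ¬(x₁ = 0 ∧ x₂ = 0 ∧ x₃ = 0 ∧ x₄ = 0) ∧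
        algebraMap ℚ K a₁ * x₁ ^ 3 + algebraMap ℚ K a₂ * x₂ ^ 3
          + algebraMap ℚ K a₃ * x₃ ^ 3 + algebraMap ℚ K a₄ * x₄ ^ 3 = 0) :
    ∃ y₁ y₂ y₃ y₄ : ℚ, ¬(y₁ = 0 ∧ y₂ = 0 ∧ y₃ = 0 ∧ y₄ = 0) ∧
      a₁ * y₁ ^ 3 + a₂ * y₂ ^ 3 + a₃ * y₃ ^ 3 + a₄ * y₄ ^ 3 = 0 := by
  obtain ⟨θ, d, hd, hθ, hli, hspan⟩ := quad_gen K hK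
  obtain ⟨x₁, x₂, x₃, x₄, hne, h⟩ := h
  obtain ⟨p₁, q₁, rfl⟩ := hspan x₁
  obtain ⟨p₂, q₂, rfl⟩ := hspan x₂
  obtain ⟨p₃, q₃, rfl⟩ := hspan x₃
  obtain ⟨p₄, q₄, rfl⟩ := hspan x₄
  obtain ⟨A, hA⟩ : ∃ A, A = a₁ * p₁ ^ 3 + a₂ * p₂ ^ 3 + a₃ * p₃ ^ 3 + a₄ * p₄ ^ 3 := ⟨_, rfl⟩
  obtain ⟨B, hB⟩ : ∃ B, B = a₁ * p₁ ^ 2 * q₁ + a₂ * p₂ ^ 2 * q₂ + a₃ * p₃ ^ 2 * q₃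
    + a₄ * p₄ ^ 2 * q₄ := ⟨_, rfl⟩
  obtain ⟨C, hC⟩ : ∃ C, C = a₁ * p₁ * q₁ ^ 2 + a₂ * p₂ * q₂ ^ 2 + a₃ * p₃ * q₃ ^ 2
    + a₄ * p₄ * q₄ ^ 2 := ⟨_, rfl⟩
  obtain ⟨D, hD⟩ : ∃ D, D = a₁ * q₁ ^ 3 + a₂ * q₂ ^ 3 + a₃ * q₃ ^ 3 + a₄ * q₄ ^ 3 := ⟨_, rfl⟩
  obtain ⟨e1, e2⟩ := hli (A + 3 * d * C) (3 * B + d * D) (by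
    rw [← h, hA, hB, hC, hD]
    simp only [map_add, map_mul, map_pow, map_ofNat, ← hθ]
    ring)
  by_cases hD0 : D = 0
  · by_cases hq : q₁ = 0 ∧ q₂ = 0 ∧ q₃ = 0 ∧ q₄ = 0
    · obtain ⟨rfl, rfl, rfl, rfl⟩ := hq
      refine ⟨p₁, p₂, p₃, p₄, ?_, ?_⟩
      · rintro ⟨rfl, rfl, rfl, rfl⟩
        exact hne (by simp)
      · rw [← hA]
        have : C = 0 := by rw [hC]; ring
        rw [this] at e1
        linarith
    · exact ⟨q₁, q₂, q₃, q₄, hq, by rw [← hD, hD0]⟩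
  · refine ⟨D * p₁ - 3 * C * q₁, D * p₂ - 3 * C * q₂, D * p₃ - 3 * C * q₃,
      D * p₄ - 3 * C * q₄, ?_, ?_⟩
    · rintro ⟨h1, h2, h3, h4⟩
      obtain ⟨m, hm⟩ : ∃ m, m = 3 * C / D := ⟨_, rfl⟩
      have key : ∀ p q : ℚ, D * p - 3 * C * q = 0 → p = m * q := by
        intro p q h
        rw [hm]; field_simp; linarith
      have k1 := key _ _ h1
      have k2 := key _ _ h2
      have k3 := key _ _ h3
      have k4 := key _ _ h4
      have eA : A = m ^ 3 * D := by rw [hA, hD, k1, k2, k3, k4]; ring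
      have eB : B = m ^ 2 * D := by rw [hB, hD, k1, k2, k3, k4]; ring
      have eC : C = m * D := by rw [hC, hD, k1, k2, k3, k4]; ring
      have f1 : m * (m ^ 2 + 3 * d) = 0 := by
        apply mul_left_cancel₀ hD0
        rw [eA, eC] at e1; linear_combination e1
      have f2 : 3 * m ^ 2 + d = 0 := by
        apply mul_left_cancel₀ hD0
        rw [eB] at e2; linear_combination e2
      rcases mul_eq_zero.mp f1 with h0 | h0
      · rw [h0] at f2; exact hd (by linarith)
      · exact hd (by linarith)
    · have : A * D ^ 3 - 9 * B * C * D ^ 2 + 27 * C ^ 3 * D - 27 * C ^ 3 * D = 0 := by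
        linear_combination D ^ 3 * e1 - 3 * C * D ^ 2 * e2
      have e : a₁ * (D * p₁ - 3 * C * q₁) ^ 3 + a₂ * (D * p₂ - 3 * C * q₂) ^ 3
          + a₃ * (D * p₃ - 3 * C * q₃) ^ 3 + a₄ * (D * p₄ - 3 * C * q₄) ^ 3
          = A * D ^ 3 - 9 * B * C * D ^ 2 + 27 * C ^ 3 * D - 27 * C ^ 3 * D := by
        linear_combination (-D ^ 3) * hA + 9 * C * D ^ 2 * hB - 27 * C ^ 2 * D * hC
          + 27 * C ^ 3 * hD
      rw [e, this]
end
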